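/- arXiv:1509.07983 — 2 statements merged into one kernel-verified Lean document; each statement's English description precedes it below -/
import Mathlib

section
/- Let x_1,…,x_N ∈ ℝ^m be partitioned into k clusters of sizes n_1,…,n_k, and set X := Σ_{a=1}^k (1/n_a)·1_a 1_aᵀ. Then the following are equivalent: (a) X solves the k-means SDP; (b) every optimizer (z, α, β) of the dual program satisfies Q^{(a,a)}1 = 0 and β^{(a,a)} = 0 for every a ∈ {1,…,k}; (c) every optimizer (z, α, β) of the dual program satisfies α_{a,r} = −z/n_a + (1/n_a²)·1ᵀD^{(a,a)}1 − (2/n_a)·e_rᵀD^{(a,a)}1 for every cluster a and every index r in cluster a. -/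
open scoped BigOperators
open Matrix

namespace Stmt0

/-- Index type for `N` points partitioned into `k` clusters of sizes `n 0, …, n (k−1)`:
the pair `⟨a, i⟩` is the `i`-th point of cluster `a`. -/
abbrev Idx (k : ℕ) (n : Fin k → ℕ) := (a : Fin k) × Fin (n a)

variable {m k : ℕ} {n : Fin k → ℕ}

/-- The matrix of squared pairwise distances `D_{pq} = ‖x_p − x_q‖₂²`. -/
noncomputable def sqDist (x : Idx k n → EuclideanSpace ℝ (Fin m)) :
    Matrix (Idx k n) (Idx k n) ℝ :=
  fun p q => ‖x p - x q‖ ^ 2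

/-- Feasibility for the k-means SDP: `Tr X = k`, `X1 = 1`, `X ≥ 0` entrywise,
`X ⪰ 0`. -/
def SDPFeasible (X : Matrix (Idx k n) (Idx k n) ℝ) : Prop :=
  X.trace = (k : ℝ) ∧ X *ᵥ (fun _ => (1 : ℝ)) = (fun _ => (1 : ℝ)) ∧
    (∀ p q, 0 ≤ X p q) ∧ X.PosSemidef

/-- `X` solves the k-means SDP for the points `x`: it is feasible and attains the
minimum of `Tr(DX)` over the feasible region. -/
noncomputable def SolvesSDP (x : Idx k n → EuclideanSpace ℝ (Fin m))
    (X : Matrix (Idx k n) (Idx k n) ℝ) : Prop :=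
  SDPFeasible X ∧ ∀ Y : Matrix (Idx k n) (Idx k n) ℝ, SDPFeasible Y →
    (sqDist x * X).trace ≤ (sqDist x * Y).trace

/-- The matrix `Q = zI + (α1ᵀ + 1αᵀ)/2 − β/2 + D` appearing in the dual program. -/
noncomputable def dualQ (x : Idx k n → EuclideanSpace ℝ (Fin m)) (z : ℝ)
    (α : Idx k n → ℝ) (β : Matrix (Idx k n) (Idx k n) ℝ) :
    Matrix (Idx k n) (Idx k n) ℝ :=
  fun p q => z * (if p = q then 1 else 0) + (α p + α q) / 2 - β p q / 2 + sqDist x p q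

/-- Feasibility for the dual program: `β` symmetric with nonnegative entries and
`Q ⪰ 0`. -/
noncomputable def DualFeasible (x : Idx k n → EuclideanSpace ℝ (Fin m)) (z : ℝ)
    (α : Idx k n → ℝ) (β : Matrix (Idx k n) (Idx k n) ℝ) : Prop :=
  β.IsSymm ∧ (∀ p q, 0 ≤ β p q) ∧ (dualQ x z α β).PosSemidef

/-- The dual objective `kz + Σᵢ αᵢ`. -/
noncomputable def dualObj (z : ℝ) (α : Idx k n → ℝ) : ℝ := k * z + ∑ p, α p

/-- `(z, α, β)` is an optimizer of the dual program. -/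
noncomputable def DualOptimal (x : Idx k n → EuclideanSpace ℝ (Fin m)) (z : ℝ)
    (α : Idx k n → ℝ) (β : Matrix (Idx k n) (Idx k n) ℝ) : Prop :=
  DualFeasible x z α β ∧ ∀ z' α' β', DualFeasible x z' α' β' → dualObj z α ≤ dualObj z' α'

end Stmt0

open Stmt0

/-!
Weak duality is the identity `Tr(QX) = kz + ∑ α - Tr(βX)/2 + Tr(DX)` for feasible `X`. When the
optimal values agree, `Tr(QX) = Tr(βX) = 0`, hence `QX = 0` and `β` vanishes wherever `X` does not;
for the cluster matrix this is (b). Summing the rows of `Q^{(a,a)}1 = 0` gives (c), and summing (c)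
shows that the dual value equals `-Tr(DX)`, so that weak duality gives (a).

Both (a) ⟹ (b) and (c) ⟹ (a) need a dual optimizer without duality gap. It exists for every
symmetric `D`: for `1 < k < N` Slater's condition holds at a convex combination of `I` and `J/N`,
whereas for `k = N` and `k = 1` these are the only feasible points and explicit multipliers work.
-/

namespace KMeansSDP

section ConicDuality

variable {E F : Type*} [AddCommGroup E] [Module ℝ E] [AddCommGroup F] [Module ℝ F]
  {K : PointedCone ℝ E} {A : F →ₗ[ℝ] E} {b : E} {c : F →ₗ[ℝ] ℝ} {v : ℝ}

lemma mul_le_of_isGLB_of_sub_smul_mem (hv : IsGLB (c '' {x | A x - b ∈ K}) v) {t : ℝ} {x : F}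
    (hx : A x - t • b ∈ K) : t * v ≤ c x := by
  obtain ⟨s, hs, hts⟩ : ∃ s : ℝ, 0 < s ∧ 0 < t + s :=
    ⟨|t| + 1, by positivity, by linarith [neg_abs_le t]⟩
  suffices ((t + s) * v - c x) / s ≤ v by
    rw [div_le_iff₀ hs] at this
    linarith
  refine hv.2 ?_
  rintro - ⟨y, hy, rfl⟩
  have hmem : A ((t + s)⁻¹ • (x + s • y)) - b ∈ K := by
    have h := K.smul_mem (inv_nonneg.2 hts.le) (K.add_mem hx (K.smul_mem hs.le hy))
    convert h using 1
    simp only [map_smul, map_add]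
    match_scalars <;> field_simp
    ring
  have hle : v ≤ c ((t + s)⁻¹ • (x + s • y)) := hv.1 ⟨_, hmem, rfl⟩
  simp only [map_smul, map_add, smul_eq_mul] at hle
  rw [inv_mul_eq_div, le_div_iff₀ hts] at hle
  rw [div_le_iff₀ hs]
  linarith

/- The hypothesis `hslater` plays the role of an interior point of `K`; M. Riesz extension then
replaces a separation argument, so no topology on `E` is needed. -/
theorem exists_dual_of_isGLB (hv : IsGLB (c '' {x | A x - b ∈ K}) v)
    (hslater : ∀ u, ∃ (t : ℝ) (x : F), A x - t • b + u ∈ K) :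
    ∃ g : E →ₗ[ℝ] ℝ, (∀ u ∈ K, 0 ≤ g u) ∧ (∀ x, g (A x) = c x) ∧ g b = v := by
  let T : (ℝ × F) × E →ₗ[ℝ] E :=
    ((-LinearMap.id).smulRight b |>.coprod A).coprod LinearMap.id
  let f : ℝ × F →ₗ[ℝ] ℝ := ((-v) • LinearMap.id).coprod c
  have hT (t : ℝ) (x : F) (u : E) : T ((t, x), u) = A x - t • b + u := by
    simp [T, sub_eq_neg_add]
  obtain ⟨G, hGf, hGK⟩ := riesz_extension (PointedCone.comap T K)
    ⟨LinearMap.ker (LinearMap.snd ℝ (ℝ × F) E),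
      f ∘ₗ LinearMap.fst ℝ (ℝ × F) E ∘ₗ Submodule.subtype _⟩
    (by
      rintro ⟨⟨⟨t, x⟩, u⟩, rfl : u = 0⟩ hmem
      have hx : A x - t • b ∈ K := by simpa [hT] using hmem
      simpa [f, mul_comm] using mul_le_of_isGLB_of_sub_smul_mem hv hx)
    (by
      rintro ⟨⟨t, x⟩, u⟩
      obtain ⟨s, y, hsy⟩ := hslater u
      refine ⟨⟨((s - t, y - x), 0), by simp⟩, ?_⟩
      simpa [hT] using hsy)
  have hG_ker {e} (he : T e = 0) : G e = 0 :=
    le_antisymm (by simpa using hGK (-e) (by simp [he])) (hGK e (by simp [he]))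
  have hGT (w : ℝ × F) : G (0, T (w, 0)) = f w := by
    have hdiff : G ((w, 0) - (0, T (w, 0))) = 0 := hG_ker (by simp [T])
    rw [map_sub, sub_eq_zero] at hdiff
    rw [← hdiff]
    exact hGf ⟨(w, 0), rfl⟩
  refine ⟨G ∘ₗ LinearMap.inr ℝ (ℝ × F) E, fun u hu => hGK _ (by simpa [T] using hu),
    fun x => ?_, ?_⟩
  · simpa [T, f] using hGT (0, x)
  · simpa [T, f] using hGT (-1, 0)

end ConicDuality

section PosSemidef

open scoped MatrixOrder ComplexOrder
variable {ι 𝕜 : Type*} [RCLike 𝕜]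

lemma trace_mul_nonneg_of_posSemidef [Fintype ι] {A B : Matrix ι ι 𝕜}
    (hA : A.PosSemidef) (hB : B.PosSemidef) : 0 ≤ (A * B).trace := by
  classical
  obtain ⟨C, rfl⟩ := CStarAlgebra.nonneg_iff_eq_star_mul_self.mp hA.nonneg
  rw [star_eq_conjTranspose, Matrix.mul_assoc, trace_mul_comm]
  exact (hB.mul_mul_conjTranspose_same C).trace_nonneg

lemma mul_eq_zero_of_trace_mul_eq_zero [Fintype ι] {A B : Matrix ι ι 𝕜}
    (hA : A.PosSemidef) (hB : B.PosSemidef) (h : (A * B).trace = 0) : A * B = 0 := by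
  classical
  obtain ⟨C, rfl⟩ := CStarAlgebra.nonneg_iff_eq_star_mul_self.mp hA.nonneg
  obtain ⟨E, rfl⟩ := CStarAlgebra.nonneg_iff_eq_star_mul_self.mp hB.nonneg
  simp only [star_eq_conjTranspose] at h ⊢
  have hCE : C * Eᴴ = 0 := by
    rw [← trace_mul_conjTranspose_self_eq_zero_iff, ← h, conjTranspose_mul,
      conjTranspose_conjTranspose, Matrix.mul_assoc Cᴴ, trace_mul_comm Cᴴ]
    simp only [Matrix.mul_assoc]
  rw [Matrix.mul_assoc, ← Matrix.mul_assoc C, hCE, Matrix.zero_mul, Matrix.mul_zero]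

lemma eventually_posSemidef_smul_one_add [Finite ι] [DecidableEq ι]
    {A : Matrix ι ι ℝ} (hA : A.IsHermitian) :
    ∀ᶠ s : ℝ in Filter.atTop, (s • (1 : Matrix ι ι ℝ) + A).PosSemidef := by
  have := Fintype.ofFinite ι
  obtain ⟨b, hb⟩ := A.finite_real_spectrum.bddBelow
  filter_upwards [Filter.eventually_ge_atTop (-b)] with s hs
  refine posSemidef_iff_isHermitian_and_spectrum_nonneg.2
    ⟨(isHermitian_one.smul (.all s)).add hA, fun μ hμ => ?_⟩
  rw [← Algebra.algebraMap_eq_smul_one, ← sub_add_cancel μ s,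
    spectrum.add_mem_add_iff] at hμ
  have hbμ : b ≤ μ - s := hb hμ
  change 0 ≤ μ
  linarith

end PosSemidef

section Averaging

variable {ι : Type*} [Fintype ι]

variable (ι) in
/-- The orthogonal projection `J/N` onto the span of the all-ones vector. -/
noncomputable def averaging : Matrix ι ι ℝ := (Fintype.card ι : ℝ)⁻¹ • vecMulVec 1 1

lemma averaging_apply (p q : ι) : averaging ι p q = (Fintype.card ι : ℝ)⁻¹ := by
  simp [averaging]

lemma averaging_mul (X : Matrix ι ι ℝ) :
    averaging ι * X = (Fintype.card ι : ℝ)⁻¹ • vecMulVec 1 (1 ᵥ* X) := by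
  rw [averaging, smul_mul, vecMulVec_mul]

lemma mul_averaging (X : Matrix ι ι ℝ) :
    X * averaging ι = (Fintype.card ι : ℝ)⁻¹ • vecMulVec (X *ᵥ 1) 1 := by
  rw [averaging, Matrix.mul_smul, mul_vecMulVec]

lemma averaging_mulVec_one [Nonempty ι] : averaging ι *ᵥ 1 = 1 := by
  ext p
  simp [mulVec, dotProduct, averaging_apply]

lemma isStarProjection_averaging : IsStarProjection (averaging ι) where
  isIdempotentElem := by
    rcases isEmpty_or_nonempty ι
    · exact Subsingleton.elim _ _
    · rw [IsIdempotentElem, mul_averaging, averaging_mulVec_one, averaging]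
  isSelfAdjoint := by
    ext p q
    simp [star_apply, averaging_apply]

open scoped MatrixOrder in
lemma averaging_posSemidef : (averaging ι).PosSemidef :=
  nonneg_iff_posSemidef.1 isStarProjection_averaging.nonneg

open scoped MatrixOrder in
lemma one_sub_averaging_posSemidef [DecidableEq ι] : (1 - averaging ι).PosSemidef :=
  nonneg_iff_posSemidef.1 isStarProjection_averaging.one_sub.nonneg

end Averaging

/-! ## The primal and dual programs -/

section Slack

variable {ι : Type*} [DecidableEq ι]

/-- The dual slack matrix `Q`. -/
noncomputable def slack (D : Matrix ι ι ℝ) (z : ℝ) (α : ι → ℝ) (β : Matrix ι ι ℝ) :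
    Matrix ι ι ℝ :=
  z • 1 + (1 / 2 : ℝ) • (vecMulVec α 1 + vecMulVec 1 α) - (1 / 2 : ℝ) • β + D

lemma slack_apply (D : Matrix ι ι ℝ) (z : ℝ) (α : ι → ℝ) (β : Matrix ι ι ℝ) (p q : ι) :
    slack D z α β p q = z * (if p = q then 1 else 0) + (α p + α q) / 2 - β p q / 2 + D p q := by
  simp only [slack, Matrix.add_apply, Matrix.sub_apply, Matrix.smul_apply, one_apply,
    vecMulVec_apply, Pi.one_apply, smul_eq_mul]
  ring

end Slack

section Program

variable {ι : Type*} [Fintype ι] {D X : Matrix ι ι ℝ} {k : ℝ}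

/-- Feasibility for the k-means SDP, with an arbitrary real `k` as the prescribed trace. -/
structure IsFeasible (k : ℝ) (X : Matrix ι ι ℝ) : Prop where
  trace_eq : X.trace = k
  mulVec_one : X *ᵥ 1 = 1
  nonneg : ∀ p q, 0 ≤ X p q
  posSemidef : X.PosSemidef

/-- `X` minimizes `Tr(DX)` over the k-means SDP; `D` need not be a distance matrix. -/
structure IsSolution (D : Matrix ι ι ℝ) (k : ℝ) (X : Matrix ι ι ℝ) : Prop
    extends IsFeasible k X where
  trace_le : ∀ Y, IsFeasible k Y → (D * X).trace ≤ (D * Y).trace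

/-- The set of objective values `Tr(DX)` at the feasible points of the k-means SDP. -/
def attainedValues (D : Matrix ι ι ℝ) (k : ℝ) : Set ℝ :=
  (fun X => (D * X).trace) '' {X | IsFeasible k X}

lemma IsFeasible.sum_row (hX : IsFeasible k X) (p : ι) : ∑ q, X p q = 1 := by
  simpa [mulVec, dotProduct] using congrFun hX.mulVec_one p

lemma IsFeasible.one_vecMul (hX : IsFeasible k X) : 1 ᵥ* X = 1 := by
  rw [← mulVec_transpose, ← conjTranspose_eq_transpose_of_trivial, hX.posSemidef.isHermitian.eq,
    hX.mulVec_one]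

lemma IsFeasible.one_le [Nonempty ι] (hX : IsFeasible k X) : 1 ≤ k := by
  classical
  have h := trace_mul_nonneg_of_posSemidef one_sub_averaging_posSemidef hX.posSemidef
  rw [Matrix.sub_mul, Matrix.one_mul, averaging_mul, hX.one_vecMul, trace_sub, hX.trace_eq,
    trace_smul, trace_vecMulVec] at h
  simpa using h

lemma IsFeasible.le_card (hX : IsFeasible k X) : k ≤ Fintype.card ι := by
  calc k = ∑ p, X p p := hX.trace_eq.symm
    _ ≤ ∑ p, ∑ q, X p q := Finset.sum_le_sum fun p _ =>
      Finset.single_le_sum (fun q _ => hX.nonneg p q) (Finset.mem_univ p)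
    _ = Fintype.card ι := by simp [hX.sum_row]

lemma isFeasible_one [DecidableEq ι] : IsFeasible (Fintype.card ι) (1 : Matrix ι ι ℝ) where
  trace_eq := trace_one
  mulVec_one := one_mulVec 1
  nonneg p q := by rw [one_apply]; positivity
  posSemidef := .one

lemma isFeasible_averaging [Nonempty ι] : IsFeasible 1 (averaging ι) where
  trace_eq := by simp [trace, averaging_apply]
  mulVec_one := averaging_mulVec_one
  nonneg p q := by rw [averaging_apply]; positivity
  posSemidef := averaging_posSemidef

lemma IsFeasible.smul_add_smul {l : ℝ} {Y : Matrix ι ι ℝ} (hX : IsFeasible k X)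
    (hY : IsFeasible l Y) {a b : ℝ} (ha : 0 ≤ a) (hb : 0 ≤ b) (hab : a + b = 1) :
    IsFeasible (a * k + b * l) (a • X + b • Y) where
  trace_eq := by simp [hX.trace_eq, hY.trace_eq]
  mulVec_one := by
    rw [add_mulVec, smul_mulVec, smul_mulVec, hX.mulVec_one, hY.mulVec_one, ← add_smul, hab,
      one_smul]
  nonneg p q := add_nonneg (mul_nonneg ha (hX.nonneg p q)) (mul_nonneg hb (hY.nonneg p q))
  posSemidef := (hX.posSemidef.smul ha).add (hY.posSemidef.smul hb)

section Dual

variable [DecidableEq ι] {α : ι → ℝ} {β : Matrix ι ι ℝ} {z : ℝ}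

/-- The dual objective. -/
def dualValue (k z : ℝ) (α : ι → ℝ) : ℝ := k * z + ∑ p, α p

/-- Feasibility for the dual program. -/
structure IsDualFeasible (D : Matrix ι ι ℝ) (z : ℝ) (α : ι → ℝ) (β : Matrix ι ι ℝ) : Prop where
  isSymm : β.IsSymm
  nonneg : ∀ p q, 0 ≤ β p q
  posSemidef : (slack D z α β).PosSemidef

/-- `(z, α, β)` is an optimizer of the dual program. -/
structure IsDualOptimal (D : Matrix ι ι ℝ) (k z : ℝ) (α : ι → ℝ) (β : Matrix ι ι ℝ) : Prop
    extends IsDualFeasible D z α β where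
  dualValue_le : ∀ z' α' β', IsDualFeasible D z' α' β' → dualValue k z α ≤ dualValue k z' α'

lemma IsFeasible.trace_slack_mul (hX : IsFeasible k X) (D : Matrix ι ι ℝ) (z : ℝ) (α : ι → ℝ)
    (β : Matrix ι ι ℝ) :
    (slack D z α β * X).trace = dualValue k z α - (β * X).trace / 2 + (D * X).trace := by
  simp only [slack, dualValue, Matrix.add_mul, Matrix.sub_mul, smul_mul, trace_add, trace_sub,
    trace_smul, Matrix.one_mul, vecMulVec_mul, trace_vecMulVec, hX.trace_eq, hX.one_vecMul,
    dotProduct_comm 1, ← dotProduct_mulVec, hX.mulVec_one, smul_eq_mul]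
  rw [dotProduct_one]
  ring

lemma IsDualFeasible.trace_mul_nonneg (h : IsDualFeasible D z α β) (hX : IsFeasible k X) :
    0 ≤ (β * X).trace := by
  simp only [trace, diag, mul_apply]
  exact Finset.sum_nonneg fun p _ => Finset.sum_nonneg fun q _ =>
    mul_nonneg (h.nonneg p q) (hX.nonneg q p)

lemma IsDualFeasible.neg_dualValue_le (h : IsDualFeasible D z α β) (hX : IsFeasible k X) :
    -dualValue k z α ≤ (D * X).trace := by
  have hQ := trace_mul_nonneg_of_posSemidef h.posSemidef hX.posSemidef
  rw [hX.trace_slack_mul] at hQ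
  linarith [h.trace_mul_nonneg hX]

lemma IsDualFeasible.isGLB (h : IsDualFeasible D z α β) (hX : IsFeasible k X)
    (heq : dualValue k z α = -(D * X).trace) :
    IsGLB (attainedValues D k) (-dualValue k z α) :=
  IsLeast.isGLB ⟨⟨X, hX, by simp [heq]⟩, by rintro - ⟨Y, hY, rfl⟩; exact h.neg_dualValue_le hY⟩

lemma IsDualFeasible.isDualOptimal (h : IsDualFeasible D z α β)
    (hglb : IsGLB (attainedValues D k) (-dualValue k z α)) :
    IsDualOptimal D k z α β where
  toIsDualFeasible := h
  dualValue_le z' α' β' h' := by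
    refine neg_le_neg_iff.1 (hglb.2 ?_)
    rintro - ⟨Y, hY, rfl⟩
    exact h'.neg_dualValue_le hY

end Dual

end Program

/-! ## Strong duality -/

section BoundaryTrace

variable {ι : Type*} [Fintype ι] [DecidableEq ι] {D : Matrix ι ι ℝ}

theorem exists_isDualFeasible_of_trace_eq_card (hD : D.IsSymm) :
    ∃ z α β, IsDualFeasible D z α β ∧ dualValue (Fintype.card ι) z α = -(D * 1).trace := by
  obtain ⟨M, hM⟩ := (Set.finite_range fun p : ι × ι =>
    (D p.1 p.1 + D p.2 p.2) / 2 - D p.1 p.2).bddAbove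
  replace hM (p q : ι) : (D p p + D q q) / 2 - D p q ≤ M := hM ⟨(p, q), rfl⟩
  let β : Matrix ι ι ℝ :=
    .of fun p q => 2 * (M * (1 - if p = q then 1 else 0) - (D p p + D q q) / 2 + D p q)
  have hslack : slack D (-M) (fun p => M - D p p) β = 0 := by
    ext p q
    simp only [slack_apply, β, of_apply, Matrix.zero_apply]
    ring
  refine ⟨-M, fun p => M - D p p, β, ⟨?_, fun p q => ?_, hslack ▸ .zero⟩, ?_⟩
  · ext p q
    simp only [β, transpose_apply, of_apply, hD.apply p q, eq_comm (a := q), add_comm (D q q)]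
  · rcases eq_or_ne p q with rfl | hpq
    · simp [β]
    · simp only [β, of_apply, if_neg hpq]
      linarith [hM p q]
  · simp only [dualValue, Matrix.mul_one, trace, diag_apply, Finset.sum_sub_distrib,
      Finset.sum_const, Finset.card_univ, nsmul_eq_mul]
    ring

theorem exists_isDualFeasible_of_trace_eq_one [Nonempty ι] (hD : D.IsSymm) :
    ∃ z α β, IsDualFeasible D z α β ∧ dualValue 1 z α = -(D * averaging ι).trace := by
  obtain ⟨z, hz⟩ := (eventually_posSemidef_smul_one_add
    (D.conjTranspose_eq_transpose_of_trivial.trans hD)).exists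
  set u : ι → ℝ := D *ᵥ 1 with hu
  have hu' : 1 ᵥ* D = u := by rw [hu, ← vecMul_transpose, hD.eq]
  let α : ι → ℝ := fun p => ((∑ q, u q) / Fintype.card ι - z - 2 * u p) / Fintype.card ι
  have hslack : slack D z α 0 = (1 - averaging ι) * (z • 1 + D) * (1 - averaging ι)ᴴ := by
    rw [one_sub_averaging_posSemidef.isHermitian.eq]
    simp only [Matrix.mul_sub, Matrix.sub_mul, Matrix.mul_add, Matrix.add_mul, Matrix.mul_one,
      Matrix.one_mul, Matrix.mul_smul, smul_mul, isStarProjection_averaging.isIdempotentElem.eq,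
      averaging_mul D, mul_averaging, hu', ← hu, vecMulVec_mulVec, dotProduct_one]
    ext p q
    simp only [slack_apply, α, Matrix.sub_apply, Matrix.add_apply, Matrix.smul_apply, one_apply,
      averaging_apply, vecMulVec_apply, smul_eq_mul, Pi.smul_apply, Pi.one_apply,
      MulOpposite.smul_eq_mul_unop, MulOpposite.unop_op, Matrix.zero_apply]
    ring
  refine ⟨z, α, 0, ⟨isSymm_zero, fun _ _ => le_rfl, ?_⟩, ?_⟩
  · rw [hslack]
    exact hz.mul_mul_conjTranspose_same _
  · rw [mul_averaging, trace_smul, trace_vecMulVec, ← hu, dotProduct_one]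
    simp only [dualValue, α, ← Finset.sum_div, Finset.sum_sub_distrib, Finset.sum_const,
      Finset.card_univ, nsmul_eq_mul, ← Finset.mul_sum, smul_eq_mul]
    field_simp
    ring

end BoundaryTrace

section Coefficients

variable {ι : Type*} [DecidableEq ι] {h : selfAdjoint (Matrix ι ι ℝ) →ₗ[ℝ] ℝ}

/-- The symmetric matrix `G` with `h X = Tr(GX)`. -/
noncomputable def coeffMatrix (h : selfAdjoint (Matrix ι ι ℝ) →ₗ[ℝ] ℝ) : Matrix ι ι ℝ :=
  .of fun p q => h (selfAdjointPart ℝ (single p q 1))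

lemma coe_selfAdjointPart_single (p q : ι) :
    (selfAdjointPart ℝ (single p q (1 : ℝ))).1 = (1 / 2 : ℝ) • (single p q 1 + single q p 1) := by
  rw [selfAdjointPart_apply_coe, star_eq_conjTranspose, conjTranspose_single, star_one,
    invOf_eq_inv, one_div]

lemma coeffMatrix_isSymm : (coeffMatrix h).IsSymm := by
  ext p q
  refine congrArg h (Subtype.ext ?_)
  rw [coe_selfAdjointPart_single, coe_selfAdjointPart_single, add_comm]

lemma dotProduct_coeffMatrix_mulVec [Fintype ι] (v : ι → ℝ) :
    v ⬝ᵥ coeffMatrix h *ᵥ v = h (selfAdjointPart ℝ (vecMulVec v v)) := by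
  rw [matrix_eq_sum_single (vecMulVec v v)]
  simp only [map_sum, dotProduct, mulVec, Finset.mul_sum]
  refine Finset.sum_congr rfl fun p _ => Finset.sum_congr rfl fun q _ => ?_
  rw [vecMulVec_apply, ← mul_one (v p * v q), ← smul_eq_mul (v p * v q), ← smul_single, map_smul,
    map_smul, coeffMatrix, of_apply, smul_eq_mul]
  ring

lemma coeffMatrix_posSemidef [Finite ι] (hh : ∀ X, X.1.PosSemidef → 0 ≤ h X) :
    (coeffMatrix h).PosSemidef := by
  have := Fintype.ofFinite ι
  refine .of_dotProduct_mulVec_nonneg coeffMatrix_isSymm fun v => ?_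
  rw [star_trivial, dotProduct_coeffMatrix_mulVec]
  have hv : (vecMulVec v v).PosSemidef := posSemidef_vecMulVec_self_star v
  exact hh _ ((IsSelfAdjoint.coe_selfAdjointPart_apply ℝ hv.isHermitian).symm ▸ hv)

lemma coeffMatrix_nonneg (hh : ∀ X, (∀ p q, 0 ≤ X.1 p q) → 0 ≤ h X) (p q : ι) :
    0 ≤ coeffMatrix h p q := by
  refine hh _ fun r s => ?_
  rw [coe_selfAdjointPart_single, Matrix.smul_apply, Matrix.add_apply, single_apply, single_apply]
  positivity

end Coefficients

section Constraints

variable {ι : Type*} [Fintype ι]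

variable (ι) in
/-- The space of constraint values of the k-means SDP. The matrix variable is recorded twice, once
for semidefiniteness and once for entrywise nonnegativity, so that the dual cone is a product; the
remaining components are the trace and the vector of row sums. -/
abbrev ConstraintSpace : Type _ :=
  selfAdjoint (Matrix ι ι ℝ) × selfAdjoint (Matrix ι ι ℝ) × ℝ × (ι → ℝ)

variable (ι) in
/-- The cone of admissible constraint residuals: positive semidefinite, entrywise nonnegative, and
zero in the two equality constraints. -/
def constraintCone : PointedCone ℝ (ConstraintSpace ι) where
  carrier := {u | u.1.1.PosSemidef ∧ (∀ p q, 0 ≤ u.2.1.1 p q) ∧ u.2.2 = 0}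
  add_mem' h h' := ⟨h.1.add h'.1, fun p q => add_nonneg (h.2.1 p q) (h'.2.1 p q), by
    rw [Prod.snd_add, Prod.snd_add, h.2.2, h'.2.2, add_zero]⟩
  zero_mem' := ⟨.zero, fun _ _ => le_rfl, rfl⟩
  smul_mem' r _ h := ⟨h.1.smul r.2, fun p q => mul_nonneg r.2 (h.2.1 p q), by
    rw [Prod.smul_snd, Prod.smul_snd, h.2.2, smul_zero]⟩

variable (ι) in
/-- The linear map sending a symmetric matrix to its constraint values. -/
def constraintMap : selfAdjoint (Matrix ι ι ℝ) →ₗ[ℝ] ConstraintSpace ι where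
  toFun X := (X, X, X.1.trace, X.1 *ᵥ 1)
  map_add' X Y := by simp [add_mulVec]
  map_smul' r X := by simp [smul_mulVec]

variable (ι) in
/-- The right-hand side of the constraints: trace `k` and row sums `1`. -/
def constraintTarget (k : ℝ) : ConstraintSpace ι := (0, 0, k, 1)

/-- The primal objective `X ↦ Tr(DX)` on symmetric matrices. -/
def objective (D : Matrix ι ι ℝ) : selfAdjoint (Matrix ι ι ℝ) →ₗ[ℝ] ℝ where
  toFun X := (D * X.1).trace
  map_add' X Y := by simp [Matrix.mul_add]
  map_smul' r X := by simp

lemma constraintMap_sub_mem_iff {k : ℝ} {X : selfAdjoint (Matrix ι ι ℝ)} :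
    constraintMap ι X - constraintTarget ι k ∈ constraintCone ι ↔ IsFeasible k X.1 := by
  change (X.1 - 0).PosSemidef ∧ (∀ p q, 0 ≤ (X.1 - 0) p q) ∧ (X.1.trace, X.1 *ᵥ 1) - (k, 1) = 0 ↔ _
  rw [sub_zero, sub_eq_zero, Prod.mk.injEq]
  exact ⟨fun h => ⟨h.2.2.1, h.2.2.2, h.2.1, h.1⟩, fun h => ⟨h.4, h.3, h.1, h.2⟩⟩

lemma image_objective (D : Matrix ι ι ℝ) (k : ℝ) :
    objective D '' {X | constraintMap ι X - constraintTarget ι k ∈ constraintCone ι} =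
      attainedValues D k := by
  simp only [constraintMap_sub_mem_iff]
  ext v
  constructor
  · rintro ⟨X, hX, rfl⟩
    exact ⟨X, hX, rfl⟩
  · rintro ⟨X, hX, rfl⟩
    exact ⟨⟨X, hX.posSemidef.isHermitian⟩, hX, rfl⟩

lemma exists_isHermitian_trace_eq_mulVec_one_eq [Nontrivial ι] (r : ℝ) (w : ι → ℝ) :
    ∃ Y : Matrix ι ι ℝ, Y.IsHermitian ∧ Y.trace = r ∧ Y *ᵥ 1 = w := by
  classical
  let σ : ℝ := (∑ p, w p - r) / (Fintype.card ι - 1)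
  have hN : (Fintype.card ι : ℝ) - 1 ≠ 0 := by
    have : (1 : ℝ) < Fintype.card ι := mod_cast Fintype.one_lt_card
    linarith
  refine ⟨diagonal (fun p => w p - σ) + σ • averaging ι, ?_, ?_, ?_⟩
  · exact (isHermitian_diagonal _).add (averaging_posSemidef.isHermitian.smul (.all σ))
  · rw [trace_add, trace_smul, (isFeasible_averaging (ι := ι)).trace_eq, trace_diagonal]
    simp [σ]
    field_simp
    ring
  · ext p
    simp [add_mulVec, smul_mulVec, averaging_mulVec_one, mulVec_diagonal]

lemma exists_isFeasible_smul_one_add [DecidableEq ι] [Nonempty ι] {k : ℝ} (h1 : 1 < k)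
    (hk : k < Fintype.card ι) :
    ∃ a : ℝ, 0 < a ∧ a < 1 ∧ IsFeasible k (a • (1 : Matrix ι ι ℝ) + (1 - a) • averaging ι) := by
  have hN : (0 : ℝ) < Fintype.card ι - 1 := by linarith
  obtain ⟨a, ha0, ha1, rfl⟩ : ∃ a : ℝ, 0 < a ∧ a < 1 ∧ a * Fintype.card ι + (1 - a) * 1 = k :=
    ⟨(k - 1) / (Fintype.card ι - 1), div_pos (by linarith) hN,
      (div_lt_one hN).2 (by linarith), by field_simp; ring⟩
  exact ⟨a, ha0, ha1, isFeasible_one.smul_add_smul isFeasible_averaging ha0.le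
    (sub_nonneg.2 ha1.le) (add_sub_cancel _ _)⟩

-- Slater's condition: a large multiple of the interior point `a • 1 + (1 - a) • J/N` absorbs `u`.
theorem exists_constraintMap_sub_smul_add_mem {k : ℝ} (h1 : 1 < k) (hk : k < Fintype.card ι)
    (u : ConstraintSpace ι) :
    ∃ (t : ℝ) (X : selfAdjoint (Matrix ι ι ℝ)),
      constraintMap ι X - t • constraintTarget ι k + u ∈ constraintCone ι := by
  classical
  have : Nontrivial ι := Fintype.one_lt_card_iff_nontrivial.1 (mod_cast h1.trans hk)
  obtain ⟨Y, hY, hYtr, hY1⟩ := exists_isHermitian_trace_eq_mulVec_one_eq (-u.2.2.1) (-u.2.2.2)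
  obtain ⟨a, ha0, ha1, hX₀⟩ := exists_isFeasible_smul_one_add h1 hk
  have hpsd : ∀ᶠ t : ℝ in Filter.atTop, ((t * a) • (1 : Matrix ι ι ℝ) + (Y + u.1.1)).PosSemidef :=
    (Filter.tendsto_id.atTop_mul_const ha0).eventually
      (eventually_posSemidef_smul_one_add (hY.add u.1.2))
  have hnonneg : ∀ᶠ t : ℝ in Filter.atTop,
      ∀ p q, -(Y + u.2.1.1) p q ≤ t * ((1 - a) * averaging ι p q) := by
    simp only [Filter.eventually_all, averaging_apply]
    exact fun p q => (Filter.tendsto_id.atTop_mul_const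
      (mul_pos (sub_pos.2 ha1) (by positivity))).eventually_ge_atTop _
  obtain ⟨t, ht0, htpsd, htnn⟩ := ((Filter.eventually_ge_atTop 0).and (hpsd.and hnonneg)).exists
  refine ⟨t, ⟨t • (a • 1 + (1 - a) • averaging ι) + Y,
    (hX₀.posSemidef.smul ht0).isHermitian.add hY⟩, ?_, fun p q => ?_, ?_⟩
  · convert htpsd.add (averaging_posSemidef.smul (mul_nonneg ht0 (sub_nonneg.2 ha1.le))) using 1
    change t • _ + Y - t • 0 + u.1.1 = _
    module
  · change 0 ≤ t * (a * (1 : Matrix ι ι ℝ) p q + (1 - a) * averaging ι p q) + Y p q - t * 0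
      + u.2.1.1 p q
    have h1pq : 0 ≤ t * (a * (1 : Matrix ι ι ℝ) p q) :=
      mul_nonneg ht0 (mul_nonneg ha0.le (isFeasible_one.nonneg p q))
    linarith [htnn p q, Matrix.add_apply Y u.2.1.1 p q]
  · ext1
    · change trace (_ + Y) - t * k + u.2.2.1 = 0
      rw [trace_add, trace_smul, hX₀.trace_eq, hYtr, smul_eq_mul]
      ring
    · change (_ + Y) *ᵥ 1 - t • 1 + u.2.2.2 = 0
      rw [add_mulVec, smul_mulVec, hX₀.mulVec_one, hY1]
      abel

lemma functional_apply [DecidableEq ι] (g : ConstraintSpace ι →ₗ[ℝ] ℝ) (u : ConstraintSpace ι) :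
    g u = g (u.1, 0) + g (0, u.2.1, 0) + u.2.2.1 * g (0, 0, 1, 0) +
      ∑ p, u.2.2.2 p * g (0, 0, 0, Pi.single p 1) := by
  obtain ⟨X, Y, t, w⟩ := u
  let ℓ : (ι → ℝ) →ₗ[ℝ] ℝ := g ∘ₗ .inr ℝ _ _ ∘ₗ .inr ℝ _ _ ∘ₗ .inr ℝ _ _
  have hℓ : ∑ p, w p * ℓ (Pi.single p 1) = ℓ w := by
    simp_rw [← smul_eq_mul, ← map_smul, ← map_sum, ← Pi.single_smul, smul_eq_mul, mul_one,
      Finset.univ_sum_single]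
  calc g (X, Y, t, w) = g ((X, 0) + (0, Y, 0) + t • (0, 0, 1, 0) + (0, 0, 0, w)) := by simp
    _ = g (X, 0) + g (0, Y, 0) + t * g (0, 0, 1, 0) + ℓ w := by
      rw [map_add, map_add, map_add, map_smul, smul_eq_mul]
      rfl
    _ = _ := by rw [← hℓ]; rfl

lemma objective_selfAdjointPart_single [DecidableEq ι] {D : Matrix ι ι ℝ} (hD : D.IsSymm)
    (p q : ι) : objective D (selfAdjointPart ℝ (single p q 1)) = D p q := by
  change (D * (selfAdjointPart ℝ (single p q 1)).1).trace = _
  rw [coe_selfAdjointPart_single, Matrix.mul_smul, Matrix.mul_add, trace_smul, trace_add,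
    trace_mul_single, trace_mul_single, MulOpposite.op_one, one_smul, one_smul, hD.apply p q,
    smul_eq_mul]
  ring

lemma trace_selfAdjointPart_single [DecidableEq ι] (p q : ι) :
    (selfAdjointPart ℝ (single p q (1 : ℝ))).1.trace = if p = q then 1 else 0 := by
  rw [coe_selfAdjointPart_single, trace_smul, trace_add]
  rcases eq_or_ne p q with rfl | hpq
  · simp [← two_mul]
  · simp [trace_single_eq_of_ne, hpq, hpq.symm]

lemma selfAdjointPart_single_mulVec_one [DecidableEq ι] (p q : ι) :
    (selfAdjointPart ℝ (single p q (1 : ℝ))).1 *ᵥ 1 =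
      (1 / 2 : ℝ) • (Pi.single p 1 + Pi.single q 1) := by
  rw [coe_selfAdjointPart_single, smul_mulVec, add_mulVec]
  simp [single_mulVec_eq]

theorem exists_isDualFeasible_of_functional [DecidableEq ι] {D : Matrix ι ι ℝ} (hD : D.IsSymm)
    {g : ConstraintSpace ι →ₗ[ℝ] ℝ} (hg : ∀ u ∈ constraintCone ι, 0 ≤ g u)
    (hgD : ∀ X, g (constraintMap ι X) = objective D X) (k : ℝ) :
    ∃ z α β, IsDualFeasible D z α β ∧ dualValue k z α = -g (constraintTarget ι k) := by
  let g₁ := g ∘ₗ .inl ℝ _ _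
  let g₂ := g ∘ₗ .inr ℝ _ _ ∘ₗ .inl ℝ _ _
  let z : ℝ := -g (0, 0, 1, 0)
  let α : ι → ℝ := fun p => -g (0, 0, 0, Pi.single p 1)
  have hg₁ : (coeffMatrix g₁).PosSemidef := coeffMatrix_posSemidef fun X hX =>
    hg _ ⟨hX, fun _ _ => le_rfl, rfl⟩
  have hg₂ (p q) : 0 ≤ coeffMatrix g₂ p q := coeffMatrix_nonneg (fun X hX =>
    hg _ ⟨.zero, hX, rfl⟩) p q
  have hslack : slack D z α ((2 : ℝ) • coeffMatrix g₂) = coeffMatrix g₁ := by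
    ext p q
    have h : D p q = coeffMatrix g₁ p q + coeffMatrix g₂ p q + (if p = q then 1 else 0) * -z +
        ∑ r, ((1 / 2 : ℝ) • (Pi.single p 1 + Pi.single q 1 : ι → ℝ)) r * -α r := by
      rw [← objective_selfAdjointPart_single hD p q, ← hgD, functional_apply,
        ← trace_selfAdjointPart_single p q, ← selfAdjointPart_single_mulVec_one p q]
      simp only [z, α, neg_neg]
      rfl
    simp only [Pi.smul_apply, Pi.add_apply, smul_eq_mul, mul_assoc, ← Finset.mul_sum, add_mul,
      Finset.sum_add_distrib, Pi.single_apply, ite_mul, one_mul, zero_mul, Finset.sum_ite_eq',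
      Finset.mem_univ, if_true] at h
    rw [slack_apply, h, Matrix.smul_apply, smul_eq_mul]
    split_ifs <;> ring
  refine ⟨z, α, (2 : ℝ) • coeffMatrix g₂, ⟨coeffMatrix_isSymm.smul 2,
    fun p q => mul_nonneg zero_le_two (hg₂ p q), hslack ▸ hg₁⟩, ?_⟩
  rw [functional_apply, dualValue]
  simp only [constraintTarget, Prod.mk_zero_zero, map_zero, zero_add, Pi.one_apply, one_mul,
    mul_neg, Finset.sum_neg_distrib, z, α]
  ring

end Constraints

section Optimality

variable {ι : Type*} [Fintype ι] [DecidableEq ι] {D X β : Matrix ι ι ℝ} {k z : ℝ} {α : ι → ℝ}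

theorem exists_isDualFeasible_isGLB_of_one_lt_of_lt_card (hD : D.IsSymm) (h1 : 1 < k)
    (hk : k < Fintype.card ι) :
    ∃ z α β, IsDualFeasible D z α β ∧
      IsGLB (attainedValues D k) (-dualValue k z α) := by
  have : Nonempty ι := Fintype.card_pos_iff.1 (mod_cast (zero_lt_one.trans h1).trans hk)
  obtain ⟨a, -, -, hX⟩ := exists_isFeasible_smul_one_add h1 hk
  obtain ⟨z₀, hz₀⟩ := (eventually_posSemidef_smul_one_add
    (D.conjTranspose_eq_transpose_of_trivial.trans hD)).exists
  have hdual : IsDualFeasible D z₀ 0 0 :=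
    ⟨isSymm_zero, fun _ _ => le_rfl, by simpa [slack] using hz₀⟩
  have hglb := isGLB_csInf (s := attainedValues D k) ⟨_, _, hX, rfl⟩
    ⟨_, Set.forall_mem_image.2 fun Y hY => hdual.neg_dualValue_le hY⟩
  obtain ⟨g, hg, hgD, hgk⟩ := exists_dual_of_isGLB (image_objective D k ▸ hglb)
    (exists_constraintMap_sub_smul_add_mem h1 hk)
  obtain ⟨z, α, β, h, hval⟩ := exists_isDualFeasible_of_functional hD hg hgD k
  exact ⟨z, α, β, h, by rwa [hval, neg_neg, hgk, image_objective]⟩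

theorem exists_isDualFeasible_isGLB (hD : D.IsSymm) (hX : IsFeasible k X) :
    ∃ z α β, IsDualFeasible D z α β ∧
      IsGLB (attainedValues D k) (-dualValue k z α) := by
  obtain rfl | hlt := hX.le_card.eq_or_lt
  · obtain ⟨z, α, β, h, hval⟩ := exists_isDualFeasible_of_trace_eq_card hD
    exact ⟨z, α, β, h, h.isGLB isFeasible_one hval⟩
  have : Nonempty ι := by
    by_contra hι
    rw [not_nonempty_iff] at hι
    simp [← hX.trace_eq, trace] at hlt
  obtain rfl | h1 := hX.one_le.eq_or_lt
  · obtain ⟨z, α, β, h, hval⟩ := exists_isDualFeasible_of_trace_eq_one hD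
    exact ⟨z, α, β, h, h.isGLB isFeasible_averaging hval⟩
  · exact exists_isDualFeasible_isGLB_of_one_lt_of_lt_card hD h1 hlt

lemma exists_isDualOptimal (hD : D.IsSymm) (hX : IsFeasible k X) :
    ∃ z α β, IsDualOptimal D k z α β :=
  let ⟨z, α, β, h, hglb⟩ := exists_isDualFeasible_isGLB hD hX
  ⟨z, α, β, h.isDualOptimal hglb⟩

lemma IsDualFeasible.isSolution (h : IsDualFeasible D z α β) (hX : IsFeasible k X)
    (hval : dualValue k z α = -(D * X).trace) : IsSolution D k X where
  toIsFeasible := hX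
  trace_le Y hY := by simpa [hval] using h.neg_dualValue_le hY

theorem IsSolution.dualValue_eq (hX : IsSolution D k X) (hD : D.IsSymm)
    (h : IsDualOptimal D k z α β) : dualValue k z α = -(D * X).trace := by
  obtain ⟨z', α', β', h', hglb⟩ := exists_isDualFeasible_isGLB hD hX.toIsFeasible
  have hX' : (D * X).trace ≤ -dualValue k z' α' := hglb.2 (Set.forall_mem_image.2 hX.trace_le)
  linarith [h.dualValue_le z' α' β' h', h.neg_dualValue_le hX.toIsFeasible]

theorem IsDualFeasible.slack_mul_eq_zero (h : IsDualFeasible D z α β) (hX : IsFeasible k X)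
    (hval : dualValue k z α = -(D * X).trace) : slack D z α β * X = 0 := by
  refine mul_eq_zero_of_trace_mul_eq_zero h.posSemidef hX.posSemidef (le_antisymm ?_ ?_)
  · rw [hX.trace_slack_mul, hval]
    linarith [h.trace_mul_nonneg hX]
  · exact trace_mul_nonneg_of_posSemidef h.posSemidef hX.posSemidef

theorem IsDualFeasible.mul_apply_eq_zero (h : IsDualFeasible D z α β) (hX : IsFeasible k X)
    (hval : dualValue k z α = -(D * X).trace) (p q : ι) : β p q * X q p = 0 := by
  have htr : ∑ p, ∑ q, β p q * X q p = 0 := by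
    have hQ := hX.trace_slack_mul D z α β
    rw [h.slack_mul_eq_zero hX hval, trace_zero, hval] at hQ
    have : (β * X).trace = 0 := by linarith
    simpa only [trace, diag_apply, mul_apply] using this
  have hnonneg (p q) : 0 ≤ β p q * X q p := mul_nonneg (h.nonneg p q) (hX.nonneg q p)
  have hp := (Finset.sum_eq_zero_iff_of_nonneg fun p _ =>
    Finset.sum_nonneg fun q _ => hnonneg p q).1 htr p (Finset.mem_univ p)
  exact (Finset.sum_eq_zero_iff_of_nonneg fun q _ => hnonneg p q).1 hp q (Finset.mem_univ q)

end Optimality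

/-! ## Clusterings -/

section ClusterMatrix

variable {κ : Type*} {ι : κ → Type*} [DecidableEq κ] [∀ a, Fintype (ι a)]

variable (ι) in
/-- The matrix `∑ₐ (1/nₐ) 1ₐ1ₐᵀ` of the partition of `Σ a, ι a` into the clusters `ι a`. -/
noncomputable def clusterMatrix : Matrix (Σ a, ι a) (Σ a, ι a) ℝ :=
  blockDiagonal' fun a => averaging (ι a)

lemma clusterMatrix_apply (p q : Σ a, ι a) :
    clusterMatrix ι p q = if p.1 = q.1 then (Fintype.card (ι p.1) : ℝ)⁻¹ else 0 := by
  simp only [clusterMatrix, blockDiagonal'_apply, averaging_apply, dite_eq_ite]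

variable [Fintype κ]

lemma mul_clusterMatrix_apply (M : Matrix (Σ a, ι a) (Σ a, ι a) ℝ) (p : Σ a, ι a) (a : κ)
    (j : ι a) :
    (M * clusterMatrix ι) p ⟨a, j⟩ = (Fintype.card (ι a) : ℝ)⁻¹ * ∑ i, M p ⟨a, i⟩ := by
  rw [mul_apply, Fintype.sum_sigma, Finset.sum_eq_single a]
  · simp [clusterMatrix_apply, Finset.mul_sum, mul_comm]
  · intro b _ hb
    simp [clusterMatrix_apply, hb]
  · simp

lemma trace_mul_clusterMatrix (M : Matrix (Σ a, ι a) (Σ a, ι a) ℝ) :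
    (M * clusterMatrix ι).trace =
      ∑ a, (Fintype.card (ι a) : ℝ)⁻¹ * ∑ i, ∑ j, M ⟨a, i⟩ ⟨a, j⟩ := by
  simp only [trace, diag_apply, Fintype.sum_sigma, mul_clusterMatrix_apply, Finset.mul_sum]

lemma isStarProjection_clusterMatrix : IsStarProjection (clusterMatrix ι) where
  isIdempotentElem := by
    simp only [IsIdempotentElem, clusterMatrix, ← blockDiagonal'_mul,
      isStarProjection_averaging.isIdempotentElem.eq]
  isSelfAdjoint := by
    simp only [IsSelfAdjoint, clusterMatrix, star_eq_conjTranspose, blockDiagonal'_conjTranspose,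
      averaging_posSemidef.isHermitian.eq]

open scoped MatrixOrder in
lemma isFeasible_clusterMatrix [∀ a, Nonempty (ι a)] :
    IsFeasible (Fintype.card κ) (clusterMatrix ι) where
  trace_eq := by
    rw [clusterMatrix, trace_blockDiagonal']
    simp [isFeasible_averaging.trace_eq]
  mulVec_one := by
    ext p
    rw [mulVec, dotProduct, Fintype.sum_sigma, Fintype.sum_eq_single p.1 fun b hb => by
      simp [clusterMatrix_apply, hb.symm]]
    simp [clusterMatrix_apply]
  nonneg p q := by
    rw [clusterMatrix_apply]
    positivity
  posSemidef := nonneg_iff_posSemidef.1 isStarProjection_clusterMatrix.nonneg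

end ClusterMatrix

section ClusterOptimality

variable {κ : Type*} {ι : κ → Type*} [∀ a, Fintype (ι a)] {D β : Matrix (Σ a, ι a) (Σ a, ι a) ℝ}
  {z : ℝ} {α : (Σ a, ι a) → ℝ}

/-- The value of the multiplier `α_{a,r}` prescribed by condition (c), as a function of `z`. -/
noncomputable def clusterMultiplier (D : Matrix (Σ a, ι a) (Σ a, ι a) ℝ) (z : ℝ) (a : κ)
    (r : ι a) : ℝ :=
  -z / Fintype.card (ι a) + ((Fintype.card (ι a) : ℝ) ^ 2)⁻¹ * ∑ i, ∑ j, D ⟨a, i⟩ ⟨a, j⟩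
    - (2 / Fintype.card (ι a)) * ∑ j, D ⟨a, r⟩ ⟨a, j⟩

variable [∀ a, Nonempty (ι a)] [DecidableEq κ]

lemma dualValue_eq_of_eq_clusterMultiplier [Fintype κ]
    (hα : ∀ a r, α ⟨a, r⟩ = clusterMultiplier D z a r) :
    dualValue (Fintype.card κ) z α = -(D * clusterMatrix ι).trace := by
  have hsum (a : κ) : ∑ r, α ⟨a, r⟩ =
      -z - (Fintype.card (ι a) : ℝ)⁻¹ * ∑ i, ∑ j, D ⟨a, i⟩ ⟨a, j⟩ := by
    simp only [hα, clusterMultiplier, Finset.sum_sub_distrib, ← Finset.mul_sum, Finset.sum_const,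
      Finset.card_univ, nsmul_eq_mul]
    field_simp
    ring
  simp only [trace_mul_clusterMatrix, dualValue, Fintype.sum_sigma, hsum, Finset.sum_sub_distrib,
    Finset.sum_const, Finset.card_univ, nsmul_eq_mul]
  ring

variable [∀ a, DecidableEq (ι a)]

lemma apply_eq_clusterMultiplier {a : κ} (hQ : ∀ i, ∑ j, slack D z α β ⟨a, i⟩ ⟨a, j⟩ = 0)
    (hβ : ∀ i j, β ⟨a, i⟩ ⟨a, j⟩ = 0) (r : ι a) : α ⟨a, r⟩ = clusterMultiplier D z a r := by
  have hN : (Fintype.card (ι a) : ℝ) ≠ 0 := Nat.cast_ne_zero.2 Fintype.card_ne_zero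
  set N := (Fintype.card (ι a) : ℝ) with hNdef
  set s := ∑ j, α ⟨a, j⟩ with hs
  have hrow (i : ι a) : z + (N * α ⟨a, i⟩ + s) / 2 + ∑ j, D ⟨a, i⟩ ⟨a, j⟩ = 0 := by
    rw [← hQ i]
    simp only [slack_apply, hβ, Finset.sum_add_distrib, Finset.sum_sub_distrib, ← Finset.sum_div,
      ← hs, ← Finset.mul_sum]
    simp [hNdef]
  have htotal : N * z + N * s + ∑ i, ∑ j, D ⟨a, i⟩ ⟨a, j⟩ = 0 := by
    have h := Finset.sum_eq_zero fun i (_ : i ∈ Finset.univ) => hrow i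
    simp only [Finset.sum_add_distrib, ← Finset.sum_div, ← Finset.mul_sum, ← hs, Finset.sum_const,
      Finset.card_univ, nsmul_eq_mul, ← hNdef] at h
    linarith
  rw [clusterMultiplier, ← hNdef]
  field_simp
  linear_combination 2 * N * hrow r - htotal

variable [Fintype κ]

lemma IsDualOptimal.sum_slack_block_eq_zero (h : IsDualOptimal D (Fintype.card κ) z α β)
    (hX : IsSolution D (Fintype.card κ) (clusterMatrix ι)) (hD : D.IsSymm) (a : κ) (i : ι a) :
    ∑ j, slack D z α β ⟨a, i⟩ ⟨a, j⟩ = 0 := by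
  have hQ := h.slack_mul_eq_zero hX.toIsFeasible (hX.dualValue_eq hD h)
  simpa [mul_clusterMatrix_apply] using congrFun₂ hQ ⟨a, i⟩ ⟨a, i⟩

lemma IsDualOptimal.block_eq_zero (h : IsDualOptimal D (Fintype.card κ) z α β)
    (hX : IsSolution D (Fintype.card κ) (clusterMatrix ι)) (hD : D.IsSymm) (a : κ) (i j : ι a) :
    β ⟨a, i⟩ ⟨a, j⟩ = 0 := by
  have hβ := h.mul_apply_eq_zero hX.toIsFeasible (hX.dualValue_eq hD h) ⟨a, i⟩ ⟨a, j⟩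
  simpa [clusterMatrix_apply] using hβ

end ClusterOptimality

section SqDist

variable {m k : ℕ} {n : Fin k → ℕ} {x : Idx k n → EuclideanSpace ℝ (Fin m)}
  {X β : Matrix (Idx k n) (Idx k n) ℝ} {z : ℝ} {α : Idx k n → ℝ}

lemma sqDist_isSymm : (sqDist x).IsSymm := by
  ext p q
  simp only [sqDist, transpose_apply, norm_sub_rev]

lemma dualQ_eq_slack : dualQ x z α β = slack (sqDist x) z α β := by
  ext p q
  rw [slack_apply, dualQ]

lemma sdpFeasible_iff : SDPFeasible X ↔ IsFeasible k X :=
  ⟨fun h => ⟨h.1, h.2.1, h.2.2.1, h.2.2.2⟩, fun h => ⟨h.1, h.2, h.3, h.4⟩⟩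

lemma solvesSDP_iff : SolvesSDP x X ↔ IsSolution (sqDist x) k X := by
  simp only [SolvesSDP, sdpFeasible_iff]
  exact ⟨fun h => ⟨h.1, h.2⟩, fun h => ⟨h.1, h.2⟩⟩

lemma dualFeasible_iff : DualFeasible x z α β ↔ IsDualFeasible (sqDist x) z α β := by
  rw [DualFeasible, dualQ_eq_slack]
  exact ⟨fun h => ⟨h.1, h.2.1, h.2.2⟩, fun h => ⟨h.1, h.2, h.3⟩⟩

lemma dualOptimal_iff : DualOptimal x z α β ↔ IsDualOptimal (sqDist x) k z α β := by
  simp only [DualOptimal, dualFeasible_iff]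
  exact ⟨fun h => ⟨h.1, h.2⟩, fun h => ⟨h.1, h.2⟩⟩

end SqDist

end KMeansSDP

open KMeansSDP

theorem kmeans_SDP_integral_optimality_general {κ : Type*} [Fintype κ] [DecidableEq κ]
    {ι : κ → Type*} [∀ a, Fintype (ι a)] [∀ a, DecidableEq (ι a)] [∀ a, Nonempty (ι a)]
    {D : Matrix (Σ a, ι a) (Σ a, ι a) ℝ} (hD : D.IsSymm) :
    [IsSolution D (Fintype.card κ) (clusterMatrix ι),
      ∀ z α β, IsDualOptimal D (Fintype.card κ) z α β → ∀ a,
        (∀ i, ∑ j, slack D z α β ⟨a, i⟩ ⟨a, j⟩ = 0) ∧ ∀ i j, β ⟨a, i⟩ ⟨a, j⟩ = 0,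
      ∀ z α β, IsDualOptimal D (Fintype.card κ) z α β → ∀ a r,
        α ⟨a, r⟩ = clusterMultiplier D z a r].TFAE := by
  tfae_have 1 → 2 := fun hX z α β h a =>
    ⟨h.sum_slack_block_eq_zero hX hD a, h.block_eq_zero hX hD a⟩
  tfae_have 2 → 3 := fun hb z α β h a =>
    apply_eq_clusterMultiplier (hb z α β h a).1 (hb z α β h a).2
  tfae_have 3 → 1 := fun hc => by
    obtain ⟨z, α, β, h⟩ := exists_isDualOptimal hD isFeasible_clusterMatrix
    exact h.isSolution isFeasible_clusterMatrix (dualValue_eq_of_eq_clusterMultiplier (hc z α β h))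
  tfae_finish

/-- For the clustering matrix `X = Σ_a (1/n_a)·1_a1_aᵀ`, the following
are equivalent: (a) `X` solves the k-means SDP; (b) every dual optimizer `(z, α, β)`
satisfies `Q^{(a,a)}1 = 0` and `β^{(a,a)} = 0` for every cluster `a`; (c) every dual
optimizer `(z, α, β)` satisfies
`α_{a,r} = −z/n_a + (1/n_a²)·1ᵀD^{(a,a)}1 − (2/n_a)·e_rᵀD^{(a,a)}1` for all `a, r`. -/
theorem kmeans_SDP_integral_optimality
    (m k : ℕ) (n : Fin k → ℕ) (hn : ∀ a, 0 < n a)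
    (x : Idx k n → EuclideanSpace ℝ (Fin m))
    (X : Matrix (Idx k n) (Idx k n) ℝ)
    (hX : X = fun p q => if p.1 = q.1 then ((n p.1 : ℝ))⁻¹ else 0) :
    (SolvesSDP x X ↔
      (∀ (z : ℝ) (α : Idx k n → ℝ) (β : Matrix (Idx k n) (Idx k n) ℝ),
        DualOptimal x z α β → ∀ a : Fin k,
          (∀ i : Fin (n a), ∑ j : Fin (n a), dualQ x z α β ⟨a, i⟩ ⟨a, j⟩ = 0) ∧
          (∀ i j : Fin (n a), β ⟨a, i⟩ ⟨a, j⟩ = 0))) ∧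
    (SolvesSDP x X ↔
      (∀ (z : ℝ) (α : Idx k n → ℝ) (β : Matrix (Idx k n) (Idx k n) ℝ),
        DualOptimal x z α β → ∀ (a : Fin k) (r : Fin (n a)),
          α ⟨a, r⟩ = -z / (n a : ℝ)
            + ((n a : ℝ) ^ 2)⁻¹ * ∑ i : Fin (n a), ∑ j : Fin (n a), sqDist x ⟨a, i⟩ ⟨a, j⟩
            - (2 / (n a : ℝ)) * ∑ j : Fin (n a), sqDist x ⟨a, r⟩ ⟨a, j⟩)) := by
  obtain rfl : X = clusterMatrix fun a => Fin (n a) := by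
    ext p q
    rw [hX, clusterMatrix_apply, Fintype.card_fin]
  have : ∀ a, Nonempty (Fin (n a)) := fun a => Fin.pos_iff_nonempty.1 (hn a)
  have h := kmeans_SDP_integral_optimality_general (sqDist_isSymm (x := x))
  simp only [Fintype.card_fin, clusterMultiplier, ← solvesSDP_iff, ← dualOptimal_iff,
    ← dualQ_eq_slack] at h
  exact ⟨h.out 0 1, h.out 0 2⟩
end

section
/- Fix k, m, centers γ_1,…,γ_k ∈ ℝ^m, and a rotation-invariant probability distribution 𝒟 on ℝ^m supported on the closed unit ball with sup{t : Pr(‖r‖₂ ≥ t) > 0} = 1. If Δ := min_{a≠b} ‖γ_a − γ_b‖₂ satisfies Δ > 2 + k²/m, then there exist constants c > 0 and n₀ (depending only on 𝒟 and the centers γ) such that for every n ≥ n₀: with probability at least 1 − e^{−cn} over a draw from the (𝒟, γ, n)-stochastic ball model, the matrix X := Σ_{a=1}^k (1/n)·1_{A_a}1_{A_a}ᵀ corresponding to the planted clusters solves the k-means SDP (so the SDP recovers the planted clusters). -/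
open scoped BigOperators ENNReal
open Matrix MeasureTheory

namespace Stmt4

variable {m : ℕ} {ι : Type*} [Fintype ι] [DecidableEq ι]

/-- The matrix of squared pairwise distances `D_{pq} = ‖x_p − x_q‖₂²`. -/
noncomputable def sqDist (x : ι → EuclideanSpace ℝ (Fin m)) : Matrix ι ι ℝ :=
  fun p q => ‖x p - x q‖ ^ 2

/-- Feasibility for the k-means SDP. -/
def SDPFeasible (k : ℕ) (X : Matrix ι ι ℝ) : Prop :=
  X.trace = (k : ℝ) ∧ X *ᵥ (fun _ => (1 : ℝ)) = (fun _ => (1 : ℝ)) ∧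
    (∀ p q, 0 ≤ X p q) ∧ X.PosSemidef

/-- `X` solves the k-means SDP for the points `x`. -/
noncomputable def SolvesSDP (k : ℕ) (x : ι → EuclideanSpace ℝ (Fin m))
    (X : Matrix ι ι ℝ) : Prop :=
  SDPFeasible k X ∧ ∀ Y : Matrix ι ι ℝ, SDPFeasible k Y →
    (sqDist x * X).trace ≤ (sqDist x * Y).trace

end Stmt4

open Stmt4

/-!
The proof exhibits a dual certificate. Write the points of cluster `a` as `c a + y`, where `c a` is
the sample mean of the cluster, and put `δ = c a - c b`, `ζ = Δ (Δ - 2)` and `g = ‖δ‖² - ζ`, for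
some `Δ > 2` slightly below all distances between centers. For `p`, `q` in distinct clusters `a`,
`b`, expanding the square gives
`‖x p - x q‖² = (4/g ⟪δ, y p⟫ ⟪δ, y q⟫ - 2 ⟪y p, y q⟫)`
`  + (g + 2 ⟪δ, y p⟫) (g - 2 ⟪δ, y q⟫) / g + ‖y p‖² + ‖y q‖² + ζ`.
The second summand defines a matrix `B`, taken to be `0` within clusters. It is entrywise
nonnegative because the points lie in balls of radius about `1` and `‖δ‖² - 2 ‖δ‖ ≥ ζ`. The first
summand defines a matrix `M`, equal to `-2 ⟪y p, y q⟫` within clusters, which annihilates the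
indicator vectors of the clusters since the `y` of each cluster sum to zero. With `X` the planted
solution, this reads `D = (n ζ (1 - X) + M) + B + α 1ᵀ + 1 αᵀ - n ζ 1`, whose first two terms have
trace `0` against `X`, and nonnegative trace against every feasible matrix as soon as `n ζ 1 + M` is
positive semidefinite.

The form of `M` is at least `-2 (k (1 + Δ) - Δ) n σ` times the squared norm, where `σ` is the
largest variance of the clusters in any direction, and `Δ > 2 + σ k²` makes this larger than
`-n ζ`. By rotation invariance the variance of `𝒟` is at most `1/m` in every direction. Hoeffding's
inequality, applied to the coordinates and to their products, shows that the sample means and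
variances are as close to those of `𝒟` as desired, except with exponentially small probability.
-/

open Filter ProbabilityTheory Topology
open scoped RealInnerProductSpace

namespace StochasticBall

section Certificate

variable {ι : Type*} [Fintype ι]

lemma trace_mul_nonneg {Q Y : Matrix ι ι ℝ} (hQ : Q.PosSemidef) (hY : Y.PosSemidef) :
    0 ≤ (Q * Y).trace := by
  classical
  obtain ⟨C, rfl⟩ : ∃ C : Matrix ι ι ℝ, Y = Cᴴ * C := by
    open scoped MatrixOrder in
    exact CStarAlgebra.nonneg_iff_eq_star_mul_self.mp hY.nonneg
  rw [← Matrix.mul_assoc, Matrix.trace_mul_comm, ← Matrix.mul_assoc]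
  exact (hQ.mul_mul_conjTranspose_same C).trace_nonneg

variable [DecidableEq ι]

lemma trace_mul_eq_of_decomposition {k : ℕ} {D Q B Y : Matrix ι ι ℝ} {α : ι → ℝ} {z : ℝ}
    (hD : D = Q + B + vecMulVec α 1 + vecMulVec 1 α - z • 1) (hY : SDPFeasible k Y) :
    (D * Y).trace = (Q * Y).trace + (B * Y).trace + 2 * ∑ p, α p - z * k := by
  obtain ⟨htr, hrow, -, hpsd⟩ := hY
  have hrow' : Y *ᵥ 1 = 1 := hrow
  have hcol : 1 ᵥ* Y = 1 := by
    rw [← mulVec_transpose, ← conjTranspose_eq_transpose_of_trivial, hpsd.isHermitian.eq, hrow']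
  have hα : (vecMulVec α 1 * Y).trace = ∑ p, α p := by
    rw [vecMulVec_mul, hcol, trace_vecMulVec, dotProduct_one]
  have hα' : (vecMulVec 1 α * Y).trace = ∑ p, α p := by
    rw [trace_mul_comm, mul_vecMulVec, hrow', trace_vecMulVec, one_dotProduct]
  rw [hD]
  simp only [sub_mul, add_mul, trace_sub, trace_add, smul_mul, Matrix.one_mul, trace_smul, htr,
    hα, hα', smul_eq_mul]
  ring

lemma solvesSDP_of_certificate {m k : ℕ} {x : ι → EuclideanSpace ℝ (Fin m)}
    {X Q B : Matrix ι ι ℝ} {α : ι → ℝ} {z : ℝ}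
    (hD : sqDist x = Q + B + vecMulVec α 1 + vecMulVec 1 α - z • 1)
    (hQ : Q.PosSemidef) (hB : ∀ p q, 0 ≤ B p q) (hX : SDPFeasible k X)
    (hQX : (Q * X).trace = 0) (hBX : (B * X).trace = 0) :
    SolvesSDP k x X := by
  refine ⟨hX, fun Y hY ↦ ?_⟩
  have hQY : 0 ≤ (Q * Y).trace := trace_mul_nonneg hQ hY.2.2.2
  have hBY : 0 ≤ (B * Y).trace := Finset.sum_nonneg fun p _ ↦
    Finset.sum_nonneg fun q _ ↦ mul_nonneg (hB p q) (hY.2.2.1 q p)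
  rw [trace_mul_eq_of_decomposition hD hX, trace_mul_eq_of_decomposition hD hY]
  linarith

end Certificate

section Planted

variable {κ ι : Type*} [DecidableEq κ] [Fintype ι]

variable (κ ι) in
/-- The planted solution `∑ₐ n⁻¹ 1_{A_a} 1_{A_a}ᵀ` of the SDP, where `κ` indexes the clusters and
`ι` the `n` points of each cluster. -/
noncomputable def planted : Matrix (κ × ι) (κ × ι) ℝ :=
  fun p q ↦ if p.1 = q.1 then (Fintype.card ι : ℝ)⁻¹ else 0

lemma isHermitian_planted : (planted κ ι).IsHermitian := by
  ext p q
  simp [planted, eq_comm]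

variable [Fintype κ]

lemma mul_planted_apply {τ : Type*} (M : Matrix τ (κ × ι) ℝ) (t : τ) (p : κ × ι) :
    (M * planted κ ι) t p = (∑ i, M t (p.1, i)) * (Fintype.card ι : ℝ)⁻¹ := by
  simp only [Matrix.mul_apply, planted, mul_ite, mul_zero, Fintype.sum_prod_type,
    Finset.sum_mul]
  rw [Finset.sum_eq_single p.1] <;> simp +contextual

lemma mul_planted_eq_zero {τ : Type*} {M : Matrix τ (κ × ι) ℝ}
    (hM : ∀ t a, ∑ i, M t (a, i) = 0) : M * planted κ ι = 0 := by
  ext t p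
  simp only [mul_planted_apply, hM, zero_mul, Matrix.zero_apply]

variable [Nonempty ι]

lemma planted_mul_planted : planted κ ι * planted κ ι = planted κ ι := by
  ext p q
  rw [mul_planted_apply]
  by_cases h : p.1 = q.1 <;> simp [planted, h]

lemma planted_mulVec_one : planted κ ι *ᵥ 1 = 1 := by
  ext p
  simp only [mulVec, dotProduct, planted, Pi.one_apply, mul_one, Fintype.sum_prod_type]
  rw [Finset.sum_eq_single p.1] <;> simp +contextual [eq_comm]

lemma sdpFeasible_planted : SDPFeasible (Fintype.card κ) (planted κ ι) := by
  refine ⟨?_, planted_mulVec_one, fun p q ↦ ?_, ?_⟩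
  · simp [planted, trace]
  · unfold planted
    positivity
  · rw [← planted_mul_planted]
    nth_rw 2 [← isHermitian_planted]
    exact posSemidef_self_mul_conjTranspose _

/-- Since `M` is supported on the range of the projection `1 - planted`, positivity of the full-rank
matrix `z • 1 + M` passes to its compression to that range. -/
lemma posSemidef_smul_one_sub_planted_add [DecidableEq ι] {M : Matrix (κ × ι) (κ × ι) ℝ} {z : ℝ}
    (hM : M * planted κ ι = 0) (h : (z • 1 + M).PosSemidef) :
    (z • (1 - planted κ ι) + M).PosSemidef := by
  have hMh : M.IsHermitian := by
    simpa using h.isHermitian.sub (isHermitian_one.smul (.all z))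
  have hM' : planted κ ι * M = 0 := by
    rw [← hMh.eq, ← isHermitian_planted.eq, ← conjTranspose_mul, hM, conjTranspose_zero]
  have hP : (1 - planted κ ι)ᴴ = 1 - planted κ ι :=
    (isHermitian_one.sub isHermitian_planted).eq
  have key : z • (1 - planted κ ι) + M =
      (1 - planted κ ι)ᴴ * (z • 1 + M) * (1 - planted κ ι) := by
    rw [hP]
    simp [mul_sub, sub_mul, mul_add, add_mul, hM, hM', planted_mul_planted]
  rw [key]
  exact h.conjTranspose_mul_mul_same _

lemma trace_smul_one_sub_planted_add_mul_planted [DecidableEq ι] {M : Matrix (κ × ι) (κ × ι) ℝ}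
    (z : ℝ) (hM : M * planted κ ι = 0) :
    ((z • (1 - planted κ ι) + M) * planted κ ι).trace = 0 := by
  simp [add_mul, sub_mul, planted_mul_planted, hM]

end Planted

section PairForm

variable {κ ι E : Type*} [NormedAddCommGroup E]

/-- Excess of the squared distance between the centers `c a` and `c b` over the threshold `ζ`. -/
noncomputable def sqGap (c : κ → E) (ζ : ℝ) (a b : κ) : ℝ := ‖c a - c b‖ ^ 2 - ζ

variable {c : κ → E} {Δ : ℝ}

lemma sqGap_pos (hΔ : 2 < Δ) {a b : κ} (hab : Δ ≤ ‖c a - c b‖) :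
    0 < sqGap c (Δ * (Δ - 2)) a b := by
  unfold sqGap
  nlinarith

lemma four_div_sqGap_mul_le (hΔ : 2 < Δ) {a b : κ} (hab : Δ ≤ ‖c a - c b‖) :
    4 / sqGap c (Δ * (Δ - 2)) a b * ‖c a - c b‖ ^ 2 ≤ 2 * Δ := by
  have hsq : Δ ^ 2 ≤ ‖c a - c b‖ ^ 2 := by gcongr
  rw [div_mul_eq_mul_div, div_le_iff₀ (sqGap_pos hΔ hab), sqGap]
  nlinarith [mul_le_mul_of_nonneg_left hsq (by linarith : 0 ≤ 2 * (Δ - 2))]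

variable [InnerProductSpace ℝ E]

/-- The matrix whose `(p, q)` entry is the form `f a b`, for `a`, `b` the clusters of `p`, `q`,
evaluated at the points `y p` and `y q`. -/
def blockMatrix (f : κ → κ → E →ₗ[ℝ] E →ₗ[ℝ] ℝ) (y : κ × ι → E) : Matrix (κ × ι) (κ × ι) ℝ :=
  fun p q ↦ f p.1 q.1 (y p) (y q)

/-- The bilinear form `(u, v) ↦ 4 / gap * ⟪δ, u⟫ * ⟪δ, v⟫ - 2 * ⟪u, v⟫` with `δ = c a - c b`
coupling the clusters `a` and `b` in the dual certificate. -/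
noncomputable def pairForm (c : κ → E) (ζ : ℝ) (a b : κ) : E →ₗ[ℝ] E →ₗ[ℝ] ℝ :=
  (4 / sqGap c ζ a b) •
    (LinearMap.mul ℝ ℝ).compl₁₂ (innerₗ E (c a - c b)) (innerₗ E (c a - c b)) - (2 : ℝ) • innerₗ E

lemma pairForm_apply (c : κ → E) (ζ : ℝ) (a b : κ) (u v : E) :
    pairForm c ζ a b u v =
      4 / sqGap c ζ a b * (⟪c a - c b, u⟫ * ⟪c a - c b, v⟫) - 2 * ⟪u, v⟫ := by
  simp only [pairForm, LinearMap.sub_apply, LinearMap.smul_apply, LinearMap.compl₁₂_apply,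
    LinearMap.mul_apply', innerₗ_apply_apply, smul_eq_mul]

lemma pairForm_self_apply (c : κ → E) (ζ : ℝ) (a : κ) (u v : E) :
    pairForm c ζ a a u v = -2 * ⟪u, v⟫ := by
  simp [pairForm_apply]

lemma isHermitian_blockMatrix_pairForm (c : κ → E) (ζ : ℝ) (y : κ × ι → E) :
    (blockMatrix (pairForm c ζ) y).IsHermitian := by
  ext p q
  have hδ : c q.1 - c p.1 = -(c p.1 - c q.1) := by abel
  simp only [conjTranspose_apply, star_trivial, blockMatrix, pairForm_apply, sqGap, hδ, norm_neg,
    inner_neg_left, real_inner_comm (y p) (y q)]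
  ring

lemma neg_mul_le_pairForm (hΔ : 2 < Δ) {a b : κ} (hab : Δ ≤ ‖c a - c b‖) (u v : E) :
    -((1 + Δ) * (‖u‖ ^ 2 + ‖v‖ ^ 2)) ≤ pairForm c (Δ * (Δ - 2)) a b u v := by
  have hgap := sqGap_pos hΔ hab
  have hprod : |⟪c a - c b, u⟫ * ⟪c a - c b, v⟫| ≤ ‖c a - c b‖ ^ 2 * (‖u‖ * ‖v‖) :=
    calc _ ≤ (‖c a - c b‖ * ‖u‖) * (‖c a - c b‖ * ‖v‖) := by
          rw [abs_mul]
          gcongr <;> exact abs_real_inner_le_norm _ _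
      _ = _ := by ring
  have hcross : -(2 * Δ * (‖u‖ * ‖v‖)) ≤
      4 / sqGap c (Δ * (Δ - 2)) a b * (⟪c a - c b, u⟫ * ⟪c a - c b, v⟫) :=
    calc -(2 * Δ * (‖u‖ * ‖v‖))
      _ ≤ -(4 / sqGap c (Δ * (Δ - 2)) a b * ‖c a - c b‖ ^ 2 * (‖u‖ * ‖v‖)) := by
          exact neg_le_neg <|
            mul_le_mul_of_nonneg_right (four_div_sqGap_mul_le hΔ hab) (by positivity)
      _ = 4 / sqGap c (Δ * (Δ - 2)) a b * -(‖c a - c b‖ ^ 2 * (‖u‖ * ‖v‖)) := by ring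
      _ ≤ _ := by
          gcongr
          exact (abs_le.1 hprod).1
  have hinner : ⟪u, v⟫ ≤ ‖u‖ * ‖v‖ := real_inner_le_norm u v
  rw [pairForm_apply]
  nlinarith [two_mul_le_add_sq ‖u‖ ‖v‖]

variable [Fintype κ]

lemma neg_mul_le_sum_pairForm (hΔ : 2 < Δ) (hc : ∀ a b, a ≠ b → Δ ≤ ‖c a - c b‖) (w : κ → E) :
    -(2 * (Fintype.card κ * (1 + Δ) - Δ) * ∑ a, ‖w a‖ ^ 2) ≤
      ∑ a, ∑ b, pairForm c (Δ * (Δ - 2)) a b (w a) (w b) := by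
  classical
  have hpair (a b : κ) : -((1 + Δ) * (‖w a‖ ^ 2 + ‖w b‖ ^ 2)) +
      (if a = b then 2 * Δ * ‖w a‖ ^ 2 else 0) ≤ pairForm c (Δ * (Δ - 2)) a b (w a) (w b) := by
    split_ifs with hab
    · subst hab
      rw [pairForm_self_apply, real_inner_self_eq_norm_sq]
      linarith
    · rw [add_zero]
      exact neg_mul_le_pairForm hΔ (hc a b hab) _ _
  refine le_of_eq_of_le ?_ (Finset.sum_le_sum fun a _ ↦ Finset.sum_le_sum fun b _ ↦ hpair a b)
  simp only [Finset.sum_add_distrib, Finset.sum_neg_distrib, ← Finset.mul_sum, Finset.sum_ite_eq,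
    Finset.mem_univ, if_true, Finset.sum_const, Finset.card_univ, nsmul_eq_mul]
  ring

variable [Fintype ι]

lemma blockMatrix_mul_planted [DecidableEq κ] (f : κ → κ → E →ₗ[ℝ] E →ₗ[ℝ] ℝ) {y : κ × ι → E}
    (hy : ∀ a, ∑ i, y (a, i) = 0) : blockMatrix f y * planted κ ι = 0 :=
  mul_planted_eq_zero fun p a ↦ by simp only [blockMatrix, ← map_sum, hy, map_zero]

lemma dotProduct_blockMatrix_mulVec (f : κ → κ → E →ₗ[ℝ] E →ₗ[ℝ] ℝ) (y : κ × ι → E)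
    (v : κ × ι → ℝ) :
    v ⬝ᵥ (blockMatrix f y *ᵥ v) =
      ∑ a, ∑ b, f a b (∑ i, v (a, i) • y (a, i)) (∑ i, v (b, i) • y (b, i)) := by
  simp only [dotProduct, mulVec, blockMatrix, Fintype.sum_prod_type, Finset.mul_sum, map_sum,
    map_smul, LinearMap.sum_apply, LinearMap.smul_apply, smul_eq_mul]
  refine Finset.sum_congr rfl fun a _ ↦ ?_
  rw [Finset.sum_comm]
  refine Finset.sum_congr rfl fun b _ ↦ ?_
  rw [Finset.sum_comm]
  refine Finset.sum_congr rfl fun i _ ↦ Finset.sum_congr rfl fun j _ ↦ ?_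
  ring

lemma norm_sum_smul_sq_le {y : ι → E} {S : ℝ} (hS : 0 ≤ S)
    (hy : ∀ w, ∑ i, ⟪y i, w⟫ ^ 2 ≤ S * ‖w‖ ^ 2) (v : ι → ℝ) :
    ‖∑ i, v i • y i‖ ^ 2 ≤ S * ∑ i, v i ^ 2 := by
  set w := ∑ i, v i • y i with hw
  have hnorm : ‖w‖ ^ 2 = ∑ i, v i * ⟪y i, w⟫ := by
    rw [← real_inner_self_eq_norm_sq]
    nth_rw 1 [hw]
    simp only [sum_inner, real_inner_smul_left]
  have hcs : ‖w‖ ^ 2 * ‖w‖ ^ 2 ≤ (S * ∑ i, v i ^ 2) * ‖w‖ ^ 2 :=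
    calc ‖w‖ ^ 2 * ‖w‖ ^ 2 = (∑ i, v i * ⟪y i, w⟫) ^ 2 := by rw [← hnorm, sq (‖w‖ ^ 2)]
      _ ≤ (∑ i, v i ^ 2) * ∑ i, ⟪y i, w⟫ ^ 2 := Finset.sum_mul_sq_le_sq_mul_sq _ _ _
      _ ≤ (∑ i, v i ^ 2) * (S * ‖w‖ ^ 2) := by gcongr; exact hy w
      _ = (S * ∑ i, v i ^ 2) * ‖w‖ ^ 2 := by ring
  rcases (sq_nonneg ‖w‖).eq_or_lt with h0 | h0
  · rw [← h0]
    positivity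
  · exact le_of_mul_le_mul_right hcs h0

lemma posSemidef_smul_one_add_blockMatrix [DecidableEq κ] [DecidableEq ι] (hΔ : 2 < Δ)
    (hc : ∀ a b, a ≠ b → Δ ≤ ‖c a - c b‖) {y : κ × ι → E} {σ : ℝ} (hσ : 0 ≤ σ)
    (hy : ∀ a w, ∑ i, ⟪y (a, i), w⟫ ^ 2 ≤ Fintype.card ι * σ * ‖w‖ ^ 2)
    (hσΔ : σ * (2 * (Fintype.card κ * (1 + Δ) - Δ)) ≤ Δ * (Δ - 2)) :
    ((Fintype.card ι * (Δ * (Δ - 2))) • 1 +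
      blockMatrix (pairForm c (Δ * (Δ - 2))) y).PosSemidef := by
  refine .of_dotProduct_mulVec_nonneg
    ((isHermitian_one.smul (.all _)).add (isHermitian_blockMatrix_pairForm c _ y)) fun v ↦ ?_
  set R : ℝ := 2 * (Fintype.card κ * (1 + Δ) - Δ)
  set w : κ → E := fun a ↦ ∑ i, v (a, i) • y (a, i)
  have hcluster (a : κ) :
      R * ‖w a‖ ^ 2 ≤ Fintype.card ι * (Δ * (Δ - 2)) * ∑ i, v (a, i) ^ 2 := by
    have hκ : (1 : ℝ) ≤ Fintype.card κ := by exact_mod_cast Fintype.card_pos_iff.2 ⟨a⟩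
    have hR : 0 ≤ R := by nlinarith
    calc R * ‖w a‖ ^ 2 ≤ R * (Fintype.card ι * σ * ∑ i, v (a, i) ^ 2) := by
          gcongr
          exact norm_sum_smul_sq_le (by positivity) (hy a) _
      _ = Fintype.card ι * (σ * R) * ∑ i, v (a, i) ^ 2 := by ring
      _ ≤ _ := by gcongr
  have hsum : R * ∑ a, ‖w a‖ ^ 2 ≤ Fintype.card ι * (Δ * (Δ - 2)) * (v ⬝ᵥ v) := by
    simp only [dotProduct, Fintype.sum_prod_type, ← sq]
    rw [Finset.mul_sum, Finset.mul_sum]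
    exact Finset.sum_le_sum fun a _ ↦ hcluster a
  rw [star_trivial, add_mulVec, dotProduct_add, smul_mulVec, one_mulVec, dotProduct_smul,
    dotProduct_blockMatrix_mulVec, smul_eq_mul]
  linarith [neg_mul_le_sum_pairForm hΔ hc w]

end PairForm

section Optimality

variable {κ ι E : Type*} [NormedAddCommGroup E] [InnerProductSpace ℝ E] [DecidableEq κ]

/-- The dual variable of the constraints `0 ≤ X p q`, for points at displacements `y` from their
centers `c`. With `g` the gap and `s`, `t` the inner products of `c a - c b` with `y p`, `y q`, the
entry `(g + 2 * s) * (g - 2 * t) / g` is `g + 2 * (s - t)` up to the term `-4 * s * t / g`, which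
`pairForm` compensates. -/
noncomputable def dualSlack (c : κ → E) (ζ : ℝ) (y : κ × ι → E) : Matrix (κ × ι) (κ × ι) ℝ :=
  fun p q ↦ if p.1 = q.1 then 0 else
    (sqGap c ζ p.1 q.1 + 2 * ⟪c p.1 - c q.1, y p⟫) *
      (sqGap c ζ q.1 p.1 + 2 * ⟪c q.1 - c p.1, y q⟫) / sqGap c ζ p.1 q.1

variable {c : κ → E} {ζ : ℝ} {y : κ × ι → E}

lemma dualSlack_nonneg (hgap : ∀ a b, a ≠ b → 0 < sqGap c ζ a b)
    (hy : ∀ p b, p.1 ≠ b → 0 ≤ sqGap c ζ p.1 b + 2 * ⟪c p.1 - c b, y p⟫) (p q : κ × ι) :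
    0 ≤ dualSlack c ζ y p q := by
  unfold dualSlack
  split_ifs with h
  · exact le_rfl
  · exact div_nonneg (mul_nonneg (hy p _ h) (hy q _ (Ne.symm h))) (hgap _ _ h).le

lemma trace_dualSlack_mul_planted [Fintype κ] [Fintype ι] :
    (dualSlack c ζ y * planted κ ι).trace = 0 :=
  Finset.sum_eq_zero fun p _ ↦ Finset.sum_eq_zero fun q _ ↦ by
    by_cases h : p.1 = q.1 <;> simp [dualSlack, planted, h, eq_comm]

lemma norm_sub_sq_eq_pairForm_add_dualSlack (hgap : ∀ a b, a ≠ b → 0 < sqGap c ζ a b)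
    (p q : κ × ι) :
    ‖c p.1 + y p - (c q.1 + y q)‖ ^ 2 =
      pairForm c ζ p.1 q.1 (y p) (y q) + dualSlack c ζ y p q + ‖y p‖ ^ 2 + ‖y q‖ ^ 2 +
        if p.1 = q.1 then 0 else ζ := by
  by_cases h : p.1 = q.1
  · simp only [dualSlack, h, if_true, pairForm_self_apply, add_sub_add_left_eq_sub,
      norm_sub_sq_real]
    ring
  · have hne := (hgap _ _ h).ne'
    have hδ : c q.1 - c p.1 = -(c p.1 - c q.1) := by abel
    have hx : c p.1 + y p - (c q.1 + y q) = c p.1 - c q.1 + (y p - y q) := by abel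
    simp only [pairForm_apply, dualSlack, h, if_false]
    rw [hx, norm_add_sq_real, norm_sub_sq_real (y p), inner_sub_right]
    simp only [sqGap, hδ, norm_neg, inner_neg_left] at hne ⊢
    field_simp
    ring

end Optimality

section MomentBounds

variable {ι E : Type*} [Fintype ι] [NormedAddCommGroup E] [InnerProductSpace ℝ E]

/-- The empirical mean of the sample `x` has norm at most `η`, and its empirical (uncentered)
second moment is at most `σ` in every direction. -/
structure MomentBounds (η σ : ℝ) (x : ι → E) : Prop where
  norm_sum_le : ‖∑ i, x i‖ ≤ Fintype.card ι * η
  sum_inner_sq_le : ∀ w, ∑ i, ⟪x i, w⟫ ^ 2 ≤ Fintype.card ι * σ * ‖w‖ ^ 2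

/-- The empirical mean. -/
noncomputable def sampleMean (x : ι → E) : E := (Fintype.card ι : ℝ)⁻¹ • ∑ i, x i

variable {x : ι → E} {η σ : ℝ} [Nonempty ι]

lemma MomentBounds.norm_sampleMean_le (h : MomentBounds η σ x) : ‖sampleMean x‖ ≤ η := by
  rw [sampleMean, norm_smul, norm_inv, Real.norm_natCast, inv_mul_le_iff₀ (by positivity)]
  exact h.norm_sum_le

lemma sum_sub_sampleMean (x : ι → E) : ∑ i, (x i - sampleMean x) = 0 := by
  rw [Finset.sum_sub_distrib, Finset.sum_const, Finset.card_univ, ← Nat.cast_smul_eq_nsmul ℝ,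
    sampleMean, smul_inv_smul₀ (by positivity), sub_self]

lemma MomentBounds.sum_inner_sub_sampleMean_sq_le (h : MomentBounds η σ x) (w : E) :
    ∑ i, ⟪x i - sampleMean x, w⟫ ^ 2 ≤ Fintype.card ι * σ * ‖w‖ ^ 2 := by
  refine le_trans ?_ (h.sum_inner_sq_le w)
  have hcross : ∑ i, ⟪x i - sampleMean x, w⟫ * ⟪sampleMean x, w⟫ = 0 := by
    rw [← Finset.sum_mul, ← sum_inner, sum_sub_sampleMean, inner_zero_left, zero_mul]
  have hpyth : ∑ i, ⟪x i, w⟫ ^ 2 = ∑ i, ⟪x i - sampleMean x, w⟫ ^ 2 +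
      2 * ∑ i, ⟪x i - sampleMean x, w⟫ * ⟪sampleMean x, w⟫ + ∑ _i : ι, ⟪sampleMean x, w⟫ ^ 2 := by
    rw [Finset.mul_sum, ← Finset.sum_add_distrib, ← Finset.sum_add_distrib]
    refine Finset.sum_congr rfl fun i _ ↦ ?_
    rw [inner_sub_left]
    ring
  rw [hpyth, hcross]
  linarith [Finset.sum_nonneg fun (i : ι) (_ : i ∈ Finset.univ) ↦ sq_nonneg ⟪sampleMean x, w⟫]

end MomentBounds

section Recovery

variable {m : ℕ} {κ ι : Type*} [DecidableEq κ] [Fintype ι] [Nonempty ι]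

lemma sqDist_eq_certificate [DecidableEq ι] {c : κ → EuclideanSpace ℝ (Fin m)} {ζ : ℝ}
    {y : κ × ι → EuclideanSpace ℝ (Fin m)} (hgap : ∀ a b, a ≠ b → 0 < sqGap c ζ a b) :
    sqDist (fun p : κ × ι ↦ c p.1 + y p) =
      ((Fintype.card ι * ζ) • (1 - planted κ ι) + blockMatrix (pairForm c ζ) y) +
        dualSlack c ζ y + vecMulVec (fun p ↦ ‖y p‖ ^ 2 + ζ / 2) 1 +
        vecMulVec 1 (fun p ↦ ‖y p‖ ^ 2 + ζ / 2) - (Fintype.card ι * ζ) • 1 := by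
  ext p q
  simp only [sqDist, norm_sub_sq_eq_pairForm_add_dualSlack hgap, Matrix.sub_apply,
    Matrix.add_apply, Matrix.smul_apply, planted, blockMatrix, vecMulVec_apply, Pi.one_apply,
    smul_eq_mul]
  split_ifs
  · field_simp
    ring
  · ring

variable [Fintype κ]

lemma solvesSDP_planted_of_centered {c : κ → EuclideanSpace ℝ (Fin m)}
    {y : κ × ι → EuclideanSpace ℝ (Fin m)} {Δ σ : ℝ} (hΔ : 2 < Δ) (hσ : 0 ≤ σ)
    (hc : ∀ a b, a ≠ b → Δ ≤ ‖c a - c b‖) (hmean : ∀ a, ∑ i, y (a, i) = 0)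
    (hcov : ∀ a w, ∑ i, ⟪y (a, i), w⟫ ^ 2 ≤ Fintype.card ι * σ * ‖w‖ ^ 2)
    (hσΔ : σ * (2 * (Fintype.card κ * (1 + Δ) - Δ)) ≤ Δ * (Δ - 2))
    (hsep : ∀ p b, p.1 ≠ b → 0 ≤ sqGap c (Δ * (Δ - 2)) p.1 b + 2 * ⟪c p.1 - c b, y p⟫) :
    SolvesSDP (Fintype.card κ) (fun p : κ × ι ↦ c p.1 + y p) (planted κ ι) := by
  classical
  have hgap (a b : κ) (hab : a ≠ b) : 0 < sqGap c (Δ * (Δ - 2)) a b := sqGap_pos hΔ (hc a b hab)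
  have hM := blockMatrix_mul_planted (pairForm c (Δ * (Δ - 2))) hmean
  exact solvesSDP_of_certificate (sqDist_eq_certificate hgap)
    (posSemidef_smul_one_sub_planted_add hM <|
      posSemidef_smul_one_add_blockMatrix hΔ hc hσ hcov hσΔ)
    (dualSlack_nonneg hgap hsep) sdpFeasible_planted
    (trace_smul_one_sub_planted_add_mul_planted _ hM) trace_dualSlack_mul_planted

lemma solvesSDP_planted_of_momentBounds {γ : κ → EuclideanSpace ℝ (Fin m)}
    {r : κ × ι → EuclideanSpace ℝ (Fin m)} {Δ η σ : ℝ} (hΔ : 2 < Δ) (hσ : 0 ≤ σ)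
    (hγ : ∀ a b, a ≠ b → Δ + 4 * η ≤ ‖γ a - γ b‖)
    (hσΔ : σ * (2 * (Fintype.card κ * (1 + Δ) - Δ)) ≤ Δ * (Δ - 2))
    (hr : ∀ p, ‖r p‖ ≤ 1) (hmom : ∀ a, MomentBounds η σ fun i ↦ r (a, i)) :
    SolvesSDP (Fintype.card κ) (fun p : κ × ι ↦ γ p.1 + r p) (planted κ ι) := by
  set μ : κ → EuclideanSpace ℝ (Fin m) := fun a ↦ sampleMean fun i ↦ r (a, i)
  have hμ (a : κ) : ‖μ a‖ ≤ η := (hmom a).norm_sampleMean_le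
  have hdist (a b : κ) (hab : a ≠ b) : Δ + 2 * η ≤ ‖γ a + μ a - (γ b + μ b)‖ := by
    have htri := norm_sub_le (γ a + μ a - (γ b + μ b)) (μ a - μ b)
    rw [show γ a + μ a - (γ b + μ b) - (μ a - μ b) = γ a - γ b by abel] at htri
    linarith [hγ a b hab, norm_sub_le (μ a) (μ b), hμ a, hμ b]
  have hη (a : κ) : 0 ≤ η := (norm_nonneg _).trans (hμ a)
  have hsep (p : κ × ι) (b : κ) (hpb : p.1 ≠ b) :
      0 ≤ sqGap (fun a ↦ γ a + μ a) (Δ * (Δ - 2)) p.1 b +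
        2 * ⟪γ p.1 + μ p.1 - (γ b + μ b), r p - μ p.1⟫ := by
    have hd := hdist p.1 b hpb
    have hη := hη b
    have hy : ‖r p - μ p.1‖ ≤ 1 + η := (norm_sub_le _ _).trans (add_le_add (hr p) (hμ p.1))
    unfold sqGap
    set d := γ p.1 + μ p.1 - (γ b + μ b)
    have hinner : -(‖d‖ * (1 + η)) ≤ ⟪d, r p - μ p.1⟫ :=
      (neg_le_neg (by gcongr)).trans (abs_le.1 (abs_real_inner_le_norm d (r p - μ p.1))).1
    have hprod : Δ * (Δ - 2) ≤ ‖d‖ * (‖d‖ - 2 * (1 + η)) := by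
      apply mul_le_mul <;> linarith
    linarith
  have hcenter : (fun p : κ × ι ↦ γ p.1 + r p) = fun p ↦ γ p.1 + μ p.1 + (r p - μ p.1) := by
    funext p
    abel
  rw [hcenter]
  exact solvesSDP_planted_of_centered (c := fun a ↦ γ a + μ a) (y := fun p ↦ r p - μ p.1) hΔ hσ
    (fun a b hab ↦ by linarith [hdist a b hab, hη a]) (fun a ↦ sum_sub_sampleMean _)
    (fun a ↦ (hmom a).sum_inner_sub_sampleMean_sq_le) hσΔ hsep

end Recovery

section Concentration

variable {Ω : Type*} [MeasurableSpace Ω]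

lemma measureReal_le_abs_le_of_hasSubgaussianMGF {μ : Measure Ω} {X : Ω → ℝ} {c : NNReal}
    (hX : HasSubgaussianMGF X c μ) {ε : ℝ} (hε : 0 ≤ ε) :
    μ.real {ω | ε ≤ |X ω|} ≤ 2 * Real.exp (-ε ^ 2 / (2 * c)) := by
  have hunion : {ω | ε ≤ |X ω|} = {ω | ε ≤ X ω} ∪ {ω | ε ≤ (-X) ω} := by
    ext ω
    exact le_abs (a := ε) (b := X ω)
  rw [hunion, two_mul]
  exact (measureReal_union_le _ _).trans
    (add_le_add (hX.measure_ge_le hε) (hX.neg.measure_ge_le hε))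

variable {𝒟 : Measure Ω} [IsProbabilityMeasure 𝒟]

lemma measureReal_pi_le_abs_sum_sub_integral_le {ι : Type*} [Fintype ι] {f : Ω → ℝ}
    (hf : AEMeasurable f 𝒟) (hf1 : ∀ᵐ x ∂𝒟, |f x| ≤ 1) (s : Finset ι) {ε : ℝ} (hε : 0 ≤ ε) :
    (Measure.pi fun _ : ι ↦ 𝒟).real {x | ε ≤ |∑ i ∈ s, (f (x i) - ∫ t, f t ∂𝒟)|} ≤
      2 * Real.exp (-ε ^ 2 / (2 * s.card)) := by
  have hcoord : HasSubgaussianMGF (fun t ↦ f t - ∫ t, f t ∂𝒟) 1 𝒟 := by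
    convert hasSubgaussianMGF_of_mem_Icc (a := -1) (b := 1) hf
      (hf1.mono fun _ ↦ abs_le.1)
    norm_num
  have hsub (i : ι) : HasSubgaussianMGF (fun x : ι → Ω ↦ f (x i) - ∫ t, f t ∂𝒟) 1
      (Measure.pi fun _ : ι ↦ 𝒟) :=
    have hi := measurePreserving_eval (fun _ : ι ↦ 𝒟) i
    .of_map (X := fun t ↦ f t - ∫ u, f u ∂𝒟) hi.aemeasurable (by rwa [hi.map_eq])
  have hindep : iIndepFun (fun i (x : ι → Ω) ↦ f (x i) - ∫ t, f t ∂𝒟)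
      (Measure.pi fun _ : ι ↦ 𝒟) := iIndepFun_pi fun _ ↦ hf.sub_const _
  simpa using measureReal_le_abs_le_of_hasSubgaussianMGF
    (HasSubgaussianMGF.sum_of_iIndepFun hindep (s := s) (c := fun _ ↦ 1) fun i _ ↦ hsub i) hε

lemma eventually_mul_exp_neg_le (K : ℝ) {c c' : ℝ} (h : c' < c) :
    ∀ᶠ n : ℕ in atTop, K * Real.exp (-c * n) ≤ Real.exp (-c' * n) := by
  have hlim : Tendsto (fun n : ℕ ↦ Real.exp ((c - c') * n)) atTop atTop :=
    Real.tendsto_exp_atTop.comp <|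
      tendsto_natCast_atTop_atTop.const_mul_atTop (sub_pos.2 h)
  filter_upwards [hlim.eventually_ge_atTop K] with n hn
  calc K * Real.exp (-c * n) ≤ Real.exp ((c - c') * n) * Real.exp (-c * n) := by gcongr
    _ = Real.exp (-c' * n) := by rw [← Real.exp_add]; ring_nf

lemma measureReal_pi_exists_le_abs_sum_sub_integral_le {κ ι τ : Type*} [Fintype κ] [Fintype ι]
    [Fintype τ] {φ : τ → Ω → ℝ} (hφ : ∀ t, AEMeasurable (φ t) 𝒟)
    (hφ1 : ∀ t, ∀ᵐ x ∂𝒟, |φ t x| ≤ 1) {ε : ℝ} (hε : 0 ≤ ε) :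
    (Measure.pi fun _ : κ × ι ↦ 𝒟).real
      {x | ∃ a t, Fintype.card ι * ε ≤ |∑ i, (φ t (x (a, i)) - ∫ u, φ t u ∂𝒟)|} ≤
        Fintype.card κ * Fintype.card τ * 2 * Real.exp (-(ε ^ 2 / 2) * Fintype.card ι) := by
  classical
  have hunion : {x : κ × ι → Ω | ∃ a t, Fintype.card ι * ε ≤
        |∑ i, (φ t (x (a, i)) - ∫ u, φ t u ∂𝒟)|} = ⋃ q : κ × τ,
      {x | Fintype.card ι * ε ≤ |∑ p ∈ {q.1} ×ˢ Finset.univ, (φ q.2 (x p) - ∫ u, φ q.2 u ∂𝒟)|} := by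
    ext x
    simp
  have hexp : -(Fintype.card ι * ε) ^ 2 / (2 * Fintype.card ι) = -(ε ^ 2 / 2) * Fintype.card ι := by
    rcases eq_or_ne (Fintype.card ι : ℝ) 0 with h | h
    · simp [h]
    · field_simp
  rw [hunion]
  refine (measureReal_iUnion_fintype_le _).trans <| (Finset.sum_le_sum fun q _ ↦
    measureReal_pi_le_abs_sum_sub_integral_le (hφ q.2) (hφ1 q.2) _ (by positivity)).trans_eq ?_
  simp only [Finset.card_product, Finset.card_singleton, Finset.card_univ, one_mul, hexp,
    Finset.sum_const, Fintype.card_prod, nsmul_eq_mul, Nat.cast_mul]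
  ring

end Concentration

section TestFunctions

variable {d E : Type*} [Fintype d] [NormedAddCommGroup E] [InnerProductSpace ℝ E]

/-- The coordinates and the products of two coordinates with respect to `b`: the functions whose
empirical averages control the first and second moments of a sample. -/
noncomputable def testFunction (b : OrthonormalBasis d ℝ E) : d ⊕ d × d → E → ℝ :=
  Sum.elim (fun j r ↦ ⟪b j, r⟫) fun q r ↦ ⟪b q.1, r⟫ * ⟪b q.2, r⟫

variable (b : OrthonormalBasis d ℝ E)

lemma continuous_testFunction (t : d ⊕ d × d) : Continuous (testFunction b t) := by
  rcases t with j | q <;> simp only [testFunction, Sum.elim_inl, Sum.elim_inr] <;> fun_prop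

lemma abs_testFunction_le_one (t : d ⊕ d × d) {r : E} (hr : ‖r‖ ≤ 1) :
    |testFunction b t r| ≤ 1 := by
  have hcoord (j : d) : |⟪b j, r⟫| ≤ 1 := by
    simpa [b.norm_eq_one] using (abs_real_inner_le_norm (b j) r).trans
      (mul_le_mul_of_nonneg_left hr (norm_nonneg _))
  rcases t with j | q
  · exact hcoord j
  · exact (abs_mul _ _).trans_le (mul_le_one₀ (hcoord _) (abs_nonneg _) (hcoord _))

lemma inner_sq_eq_sum_testFunction (r w : E) :
    ⟪r, w⟫ ^ 2 = ∑ q : d × d, ⟪b q.1, w⟫ * ⟪b q.2, w⟫ * testFunction b (.inr q) r := by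
  rw [← b.sum_inner_mul_inner r w, sq, Finset.sum_mul_sum, Fintype.sum_prod_type]
  simp only [testFunction, Sum.elim_inr, real_inner_comm r]
  exact Finset.sum_congr rfl fun j _ ↦ Finset.sum_congr rfl fun l _ ↦ by ring

lemma norm_le_of_abs_inner_le {x : E} {ε : ℝ} (hx : ∀ j, |⟪b j, x⟫| ≤ ε) :
    ‖x‖ ≤ Fintype.card d * ε :=
  calc ‖x‖ = ‖∑ j, ⟪b j, x⟫ • b j‖ := by rw [b.sum_repr']
    _ ≤ ∑ j, |⟪b j, x⟫| := (norm_sum_le _ _).trans_eq <| by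
        simp only [norm_smul, Real.norm_eq_abs, b.norm_eq_one, mul_one]
    _ ≤ ∑ _j : d, ε := Finset.sum_le_sum fun j _ ↦ hx j
    _ = Fintype.card d * ε := by simp

lemma sum_inner_mul_inner_mul_le {A : d × d → ℝ} {ε : ℝ} (hA : ∀ q, |A q| ≤ ε) (w : E) :
    ∑ q : d × d, ⟪b q.1, w⟫ * ⟪b q.2, w⟫ * A q ≤ Fintype.card d * ε * ‖w‖ ^ 2 := by
  rcases isEmpty_or_nonempty (d × d) with _ | ⟨⟨q₀⟩⟩
  · have : IsEmpty d := by simpa using ‹IsEmpty (d × d)›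
    simp
  have hε : 0 ≤ ε := (abs_nonneg _).trans (hA q₀)
  calc ∑ q : d × d, ⟪b q.1, w⟫ * ⟪b q.2, w⟫ * A q
    _ ≤ ∑ q : d × d, |⟪b q.1, w⟫| * |⟪b q.2, w⟫| * ε := Finset.sum_le_sum fun q _ ↦
        (le_abs_self _).trans <| by
          rw [abs_mul, abs_mul]
          gcongr
          exact hA q
    _ = (∑ j, |⟪b j, w⟫|) ^ 2 * ε := by
        rw [← Finset.sum_mul, Fintype.sum_prod_type, sq, Finset.sum_mul_sum]
    _ ≤ Fintype.card d * (∑ j, |⟪b j, w⟫| ^ 2) * ε := by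
        gcongr
        exact sq_sum_le_card_mul_sum_sq
    _ = Fintype.card d * ε * ‖w‖ ^ 2 := by
        simp only [sq_abs, b.sum_sq_inner_right]
        ring

variable [MeasurableSpace E] [BorelSpace E] {𝒟 : Measure E} [IsProbabilityMeasure 𝒟]

lemma integrable_testFunction (hball : ∀ᵐ r ∂𝒟, ‖r‖ ≤ 1) (t : d ⊕ d × d) :
    Integrable (testFunction b t) 𝒟 :=
  .of_bound (continuous_testFunction b t).aestronglyMeasurable 1 <|
    hball.mono fun _ ↦ abs_testFunction_le_one b t

lemma momentBounds_of_abs_sum_testFunction_le {ι : Type*} [Fintype ι]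
    (hball : ∀ᵐ r ∂𝒟, ‖r‖ ≤ 1) (hmean : ∫ r, r ∂𝒟 = 0) {σ : ℝ}
    (hcov : ∀ w, ∫ r, ⟪r, w⟫ ^ 2 ∂𝒟 ≤ σ * ‖w‖ ^ 2) {x : ι → E} {ε η : ℝ}
    (hεη : Fintype.card d * ε ≤ η)
    (hx : ∀ t, |∑ i, (testFunction b t (x i) - ∫ r, testFunction b t r ∂𝒟)| ≤
      Fintype.card ι * ε) :
    MomentBounds η (σ + η) x := by
  constructor
  · have hcoord (j : d) : |⟪b j, ∑ i, x i⟫| ≤ Fintype.card ι * ε := by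
      have : FiniteDimensional ℝ E := b.toBasis.finiteDimensional_of_finite
      have hintegrable : Integrable (fun r ↦ r) 𝒟 := .of_bound aestronglyMeasurable_id 1 hball
      have hzero : ∫ r, ⟪b j, r⟫ ∂𝒟 = 0 := by
        rw [integral_inner hintegrable, hmean, inner_zero_right]
      simpa only [testFunction, Sum.elim_inl, hzero, sub_zero, inner_sum] using hx (.inl j)
    calc ‖∑ i, x i‖ ≤ Fintype.card d * (Fintype.card ι * ε) := norm_le_of_abs_inner_le b hcoord
      _ = Fintype.card ι * (Fintype.card d * ε) := by ring
      _ ≤ Fintype.card ι * η := by gcongr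
  · intro w
    have hdev : ∑ i, (⟪x i, w⟫ ^ 2 - ∫ r, ⟪r, w⟫ ^ 2 ∂𝒟) =
        ∑ q : d × d, ⟪b q.1, w⟫ * ⟪b q.2, w⟫ *
          ∑ i, (testFunction b (.inr q) (x i) - ∫ r, testFunction b (.inr q) r ∂𝒟) := by
      simp only [inner_sq_eq_sum_testFunction b]
      rw [integral_finsetSum _ fun q _ ↦ (integrable_testFunction b hball _).const_mul _]
      simp only [integral_const_mul, ← Finset.sum_sub_distrib, ← mul_sub, Finset.mul_sum]
      exact Finset.sum_comm
    calc ∑ i, ⟪x i, w⟫ ^ 2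
      _ = ∑ i, (⟪x i, w⟫ ^ 2 - ∫ r, ⟪r, w⟫ ^ 2 ∂𝒟) +
          Fintype.card ι * ∫ r, ⟪r, w⟫ ^ 2 ∂𝒟 := by simp
      _ ≤ Fintype.card d * (Fintype.card ι * ε) * ‖w‖ ^ 2 +
          Fintype.card ι * (σ * ‖w‖ ^ 2) := by
          rw [hdev]
          gcongr
          · exact sum_inner_mul_inner_mul_le b (fun q ↦ hx (.inr q)) w
          · exact hcov w
      _ = Fintype.card ι * (σ + Fintype.card d * ε) * ‖w‖ ^ 2 := by ring
      _ ≤ _ := by gcongr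

lemma exists_eventually_measureReal_not_momentBounds_le {κ : Type*} [Fintype κ]
    [FiniteDimensional ℝ E] (hball : ∀ᵐ r ∂𝒟, ‖r‖ ≤ 1) (hmean : ∫ r, r ∂𝒟 = 0) {σ : ℝ}
    (hcov : ∀ w, ∫ r, ⟪r, w⟫ ^ 2 ∂𝒟 ≤ σ * ‖w‖ ^ 2) {η : ℝ} (hη : 0 < η) :
    ∃ c > 0, ∀ᶠ n : ℕ in atTop, (Measure.pi fun _ : κ × Fin n ↦ 𝒟).real
      {r | ¬∀ a, MomentBounds η (σ + η) fun i ↦ r (a, i)} ≤ Real.exp (-c * n) := by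
  let d := Fin (Module.finrank ℝ E)
  let b : OrthonormalBasis d ℝ E := stdOrthonormalBasis ℝ E
  obtain ⟨ε, hε, hεη⟩ : ∃ ε > 0, Fintype.card d * ε ≤ η := by
    refine ⟨η / (Fintype.card d + 1), by positivity, ?_⟩
    rw [mul_div_assoc', div_le_iff₀ (by positivity)]
    linarith
  have hrate : ε ^ 2 / 4 < ε ^ 2 / 2 := by linarith [pow_pos hε 2]
  refine ⟨ε ^ 2 / 4, by positivity, ?_⟩
  filter_upwards [eventually_mul_exp_neg_le
    (Fintype.card κ * Fintype.card (d ⊕ d × d) * 2) hrate] with n hn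
  have hdev := measureReal_pi_exists_le_abs_sum_sub_integral_le (κ := κ) (ι := Fin n) (𝒟 := 𝒟)
    (fun t ↦ (continuous_testFunction b t).aemeasurable)
    (fun t ↦ hball.mono fun _ ↦ abs_testFunction_le_one b t) hε.le
  refine (measureReal_mono fun r hr ↦ ?_).trans (hdev.trans (by rwa [Fintype.card_fin n]))
  contrapose! hr
  simp only [Set.mem_ofPred_eq, not_exists, not_le, not_not] at hr ⊢
  exact fun a ↦ momentBounds_of_abs_sum_testFunction_le b hball hmean hcov hεη fun t ↦ (hr a t).le

end TestFunctions

section RotationInvariance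

variable {E : Type*} [NormedAddCommGroup E] [InnerProductSpace ℝ E] [MeasurableSpace E]
  [BorelSpace E] {μ : Measure E}

lemma integral_id_eq_zero_of_map_neg (h : μ.map (LinearIsometryEquiv.neg ℝ : E ≃ₗᵢ[ℝ] E) = μ) :
    ∫ r, r ∂μ = 0 := by
  have hneg : ∫ r, r ∂μ = ∫ r, -r ∂μ :=
    calc ∫ r, r ∂μ = ∫ r, r ∂μ.map (LinearIsometryEquiv.neg ℝ : E ≃ₗᵢ[ℝ] E) := by rw [h]
      _ = ∫ r, -r ∂μ :=
        integral_map_equiv (LinearIsometryEquiv.neg ℝ : E ≃ₗᵢ[ℝ] E).toHomeomorph.toMeasurableEquiv _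
  rw [integral_neg] at hneg
  have : IsAddTorsionFree E := .of_isTorsionFree ℝ E
  exact self_eq_neg.1 hneg

variable (hμ : ∀ T : E ≃ₗᵢ[ℝ] E, μ.map T = μ)
include hμ

/-- A reflection exchanges any two vectors of equal norm. -/
lemma integral_inner_sq_eq_of_norm_eq {v w : E} (hvw : ‖v‖ = ‖w‖) :
    ∫ r, ⟪r, v⟫ ^ 2 ∂μ = ∫ r, ⟪r, w⟫ ^ 2 ∂μ := by
  set T : E ≃ₗᵢ[ℝ] E := (ℝ ∙ (v - w))ᗮ.reflection
  have hT : T v = w := Submodule.reflection_sub hvw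
  calc ∫ r, ⟪r, v⟫ ^ 2 ∂μ = ∫ r, ⟪T r, w⟫ ^ 2 ∂μ := by
        simp only [← hT, T.inner_map_map]
    _ = ∫ r, ⟪r, w⟫ ^ 2 ∂μ.map T :=
        (integral_map_equiv T.toHomeomorph.toMeasurableEquiv fun r ↦ ⟪r, w⟫ ^ 2).symm
    _ = ∫ r, ⟪r, w⟫ ^ 2 ∂μ := by rw [hμ]

lemma finrank_mul_integral_inner_sq [FiniteDimensional ℝ E]
    (hintegrable : Integrable (fun r ↦ ‖r‖ ^ 2) μ) (w : E) :
    Module.finrank ℝ E * ∫ r, ⟪r, w⟫ ^ 2 ∂μ = ‖w‖ ^ 2 * ∫ r, ‖r‖ ^ 2 ∂μ := by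
  let b := stdOrthonormalBasis ℝ E
  have hb (j) : ∫ r, ⟪r, w⟫ ^ 2 ∂μ = ‖w‖ ^ 2 * ∫ r, ⟪b j, r⟫ ^ 2 ∂μ := by
    rw [integral_inner_sq_eq_of_norm_eq hμ (w := ‖w‖ • b j) (by simp [norm_smul, b.norm_eq_one])]
    simp only [real_inner_smul_right, mul_pow, integral_const_mul, real_inner_comm]
  have hintegrable_coord (j) : Integrable (fun r ↦ ⟪b j, r⟫ ^ 2) μ := by
    refine hintegrable.mono' (by fun_prop) (.of_forall fun r ↦ ?_)
    rw [Real.norm_of_nonneg (sq_nonneg _), ← b.sum_sq_inner_right r]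
    exact Finset.single_le_sum (fun l _ ↦ sq_nonneg ⟪b l, r⟫) (Finset.mem_univ j)
  calc Module.finrank ℝ E * ∫ r, ⟪r, w⟫ ^ 2 ∂μ = ∑ j, ‖w‖ ^ 2 * ∫ r, ⟪b j, r⟫ ^ 2 ∂μ := by
        simp only [← hb, Finset.sum_const, Finset.card_univ, Fintype.card_fin, nsmul_eq_mul]
    _ = ‖w‖ ^ 2 * ∫ r, ‖r‖ ^ 2 ∂μ := by
        simp only [← b.sum_sq_inner_right, ← Finset.mul_sum]
        rw [integral_finsetSum _ fun j _ ↦ hintegrable_coord j]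

lemma integral_inner_sq_le_of_norm_le_one [FiniteDimensional ℝ E] [Nontrivial E]
    [IsProbabilityMeasure μ] (hball : ∀ᵐ r ∂μ, ‖r‖ ≤ 1) (w : E) :
    ∫ r, ⟪r, w⟫ ^ 2 ∂μ ≤ (Module.finrank ℝ E : ℝ)⁻¹ * ‖w‖ ^ 2 := by
  have hsq : ∀ᵐ r ∂μ, ‖r‖ ^ 2 ≤ 1 := hball.mono fun r hr ↦ pow_le_one₀ (norm_nonneg r) hr
  have hintegrable : Integrable (fun r ↦ ‖r‖ ^ 2) μ :=
    .of_bound (by fun_prop) 1 <| hsq.mono fun r hr ↦ by rwa [Real.norm_of_nonneg (sq_nonneg _)]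
  have hone : ∫ r, ‖r‖ ^ 2 ∂μ ≤ 1 := by
    simpa using integral_mono_ae hintegrable (integrable_const 1) hsq
  rw [le_inv_mul_iff₀ (by exact_mod_cast Module.finrank_pos),
    finrank_mul_integral_inner_sq hμ hintegrable]
  exact mul_le_of_le_one_right (sq_nonneg _) hone

end RotationInvariance

lemma mul_lt_mul_sub_two_of_two_add_mul_sq_lt {k : ℕ} {σ Δ : ℝ} (hσ : 0 ≤ σ)
    (h : 2 + σ * k ^ 2 < Δ) : σ * (2 * (k * (1 + Δ) - Δ)) < Δ * (Δ - 2) := by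
  have hΔ : 2 < Δ := by linarith [mul_nonneg hσ (sq_nonneg (k : ℝ))]
  have hk : (0 : ℝ) ≤ (k - 1) * (k - 2) := by
    rcases le_or_gt k 1 with hk | hk
    · have : (k : ℝ) ≤ 1 := by exact_mod_cast hk
      nlinarith
    · have : (2 : ℝ) ≤ k := by exact_mod_cast hk
      nlinarith
  have hR : 2 * (k * (1 + Δ) - Δ) ≤ Δ * k ^ 2 := by nlinarith [sq_nonneg ((k : ℝ) - 1)]
  calc σ * (2 * (k * (1 + Δ) - Δ)) ≤ σ * (Δ * k ^ 2) := by gcongr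
    _ = Δ * (σ * k ^ 2) := by ring
    _ < Δ * (Δ - 2) := by
      gcongr
      linarith

lemma exists_separation_and_tolerance {κ E : Type*} [Fintype κ] [NormedAddCommGroup E]
    {γ : κ → E} {σ : ℝ} (hσ : 0 ≤ σ)
    (hγ : ∀ a b, a ≠ b → 2 + σ * Fintype.card κ ^ 2 < ‖γ a - γ b‖) :
    ∃ Δ > 2, ∃ η > 0, (∀ a b, a ≠ b → Δ + 4 * η ≤ ‖γ a - γ b‖) ∧
      (σ + η) * (2 * (Fintype.card κ * (1 + Δ) - Δ)) ≤ Δ * (Δ - 2) := by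
  obtain ⟨Δ, hΔγ, hΔ⟩ : ∃ Δ, (∀ a b, a ≠ b → Δ < ‖γ a - γ b‖) ∧ 2 + σ * Fintype.card κ ^ 2 < Δ := by
    have hlt : ∀ᶠ Δ in 𝓝[>] (2 + σ * Fintype.card κ ^ 2), ∀ a b, a ≠ b → Δ < ‖γ a - γ b‖ := by
      simp only [eventually_all]
      exact fun a b hab ↦ (eventually_lt_nhds (hγ a b hab)).filter_mono nhdsWithin_le_nhds
    exact (hlt.and self_mem_nhdsWithin).exists
  have hgap : ∀ᶠ η in 𝓝 (0 : ℝ), ∀ a b, a ≠ b → Δ + 4 * η < ‖γ a - γ b‖ := by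
    simp only [eventually_all]
    intro a b hab
    have hcont : Continuous fun η : ℝ ↦ Δ + 4 * η := by fun_prop
    exact hcont.continuousAt.eventually_lt_const (by simpa using hΔγ a b hab)
  have hcov : ∀ᶠ η in 𝓝 (0 : ℝ),
      (σ + η) * (2 * (Fintype.card κ * (1 + Δ) - Δ)) < Δ * (Δ - 2) := by
    have hcont : Continuous fun η : ℝ ↦ (σ + η) * (2 * (Fintype.card κ * (1 + Δ) - Δ)) := by
      fun_prop
    exact hcont.continuousAt.eventually_lt_const
      (by simpa using mul_lt_mul_sub_two_of_two_add_mul_sq_lt hσ hΔ)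
  obtain ⟨η, ⟨hη₁, hη₂⟩, hη⟩ :=
    (((hgap.and hcov).filter_mono nhdsWithin_le_nhds).and
      (self_mem_nhdsWithin (s := Set.Ioi 0))).exists
  have hΔ2 : 2 < Δ := by linarith [mul_nonneg hσ (sq_nonneg (Fintype.card κ : ℝ))]
  exact ⟨Δ, hΔ2, η, hη, fun a b hab ↦ (hη₁ a b hab).le, hη₂.le⟩

lemma ofReal_one_sub_le_measure {Ω : Type*} [MeasurableSpace Ω] {μ : Measure Ω}
    [IsProbabilityMeasure μ] {S T : Set Ω} {δ : ℝ} (hT : μ.real T ≤ δ)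
    (h : ∀ᵐ ω ∂μ, ω ∉ T → ω ∈ S) : ENNReal.ofReal (1 - δ) ≤ μ S := by
  have hδ : 0 ≤ δ := measureReal_nonneg.trans hT
  have hcover : μ Set.univ ≤ μ (S ∪ T) := measure_mono_ae <| by
    filter_upwards [h] with ω hω _
    exact or_iff_not_imp_right.2 hω
  rw [ENNReal.ofReal_sub _ hδ, ENNReal.ofReal_one, tsub_le_iff_right]
  calc 1 = μ Set.univ := measure_univ.symm
    _ ≤ μ S + μ T := hcover.trans (measure_union_le S T)
    _ ≤ μ S + ENNReal.ofReal δ := by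
      gcongr
      exact (ENNReal.le_ofReal_iff_toReal_le (measure_ne_top μ T) hδ).2 hT

end StochasticBall

open StochasticBall

theorem SDP_recovers_planted_clusters_general {κ : Type*} [Fintype κ] [DecidableEq κ] {m : ℕ}
    {γ : κ → EuclideanSpace ℝ (Fin m)} {𝒟 : Measure (EuclideanSpace ℝ (Fin m))}
    [IsProbabilityMeasure 𝒟] (hball : ∀ᵐ r ∂𝒟, ‖r‖ ≤ 1) (hmean : ∫ r, r ∂𝒟 = 0) {σ : ℝ}
    (hσ : 0 ≤ σ) (hcov : ∀ w, ∫ r, ⟪r, w⟫ ^ 2 ∂𝒟 ≤ σ * ‖w‖ ^ 2)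
    (hγ : ∀ a b, a ≠ b → 2 + σ * Fintype.card κ ^ 2 < ‖γ a - γ b‖) :
    ∃ c : ℝ, 0 < c ∧ ∃ n₀ : ℕ, ∀ n : ℕ, n₀ ≤ n →
      ENNReal.ofReal (1 - Real.exp (-c * n)) ≤ (Measure.pi fun _ : κ × Fin n ↦ 𝒟)
        {r | SolvesSDP (Fintype.card κ) (fun p ↦ γ p.1 + r p) (planted κ (Fin n))} := by
  obtain ⟨Δ, hΔ, η, hη, hsep, hσΔ⟩ := exists_separation_and_tolerance hσ hγ
  obtain ⟨c, hc, hmom⟩ :=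
    exists_eventually_measureReal_not_momentBounds_le (κ := κ) hball hmean hcov hη
  obtain ⟨n₀, hn₀⟩ := eventually_atTop.1 (hmom.and (eventually_gt_atTop 0))
  refine ⟨c, hc, n₀, fun n hn ↦ ?_⟩
  obtain ⟨hbad, hpos⟩ := hn₀ n hn
  have : Nonempty (Fin n) := ⟨⟨0, hpos⟩⟩
  have hball' : ∀ᵐ r ∂Measure.pi fun _ : κ × Fin n ↦ 𝒟, ∀ p, ‖r p‖ ≤ 1 :=
    eventually_all.2 fun p ↦
      (Measure.tendsto_eval_ae_ae (μ := fun _ : κ × Fin n ↦ 𝒟) (i := p)).eventually hball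
  refine ofReal_one_sub_le_measure hbad ?_
  filter_upwards [hball'] with r hr hgood
  exact solvesSDP_planted_of_momentBounds hΔ (by positivity) hsep hσΔ hr (not_not.1 hgood)

/-- (Theorem 2.6 of the paper.) Under the `(𝒟, γ, n)`-stochastic ball
model with `Δ > 2 + k²/m` (and `𝒟` rotation-invariant, supported on the closed unit
ball, with `sup{t : Pr(‖r‖ ≥ t) > 0} = 1`), the k-means SDP recovers the planted
clusters with probability `≥ 1 − e^{−cn}` for all large `n`. -/
theorem SDP_recovers_planted_clusters
    (m k : ℕ) (hm : 0 < m) (hk : 1 < k)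
    (γ : Fin k → EuclideanSpace ℝ (Fin m))
    (𝒟 : Measure (EuclideanSpace ℝ (Fin m))) [IsProbabilityMeasure 𝒟]
    (hrot : ∀ T : EuclideanSpace ℝ (Fin m) ≃ₗᵢ[ℝ] EuclideanSpace ℝ (Fin m),
      𝒟.map T = 𝒟)
    (hball : 𝒟 {r | ‖r‖ ≤ 1} = 1)
    (hfull : sSup {t : ℝ | 0 < 𝒟 {r | t ≤ ‖r‖}} = 1)
    (hΔ : ∀ a b : Fin k, a ≠ b → 2 + (k : ℝ) ^ 2 / m < ‖γ a - γ b‖) :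
    ∃ c : ℝ, 0 < c ∧ ∃ n₀ : ℕ, ∀ n : ℕ, n₀ ≤ n →
      ENNReal.ofReal (1 - Real.exp (-c * n)) ≤
        (Measure.pi fun _ : Fin k × Fin n => 𝒟)
          {r | SolvesSDP k (fun p : Fin k × Fin n => γ p.1 + r p)
              (fun p q => if p.1 = q.1 then ((n : ℝ))⁻¹ else 0)} := by
  have : Nonempty (Fin m) := ⟨⟨0, hm⟩⟩
  have hae : ∀ᵐ r ∂𝒟, ‖r‖ ≤ 1 := (ae_iff_prob_eq_one (by fun_prop)).2 hball
  have hmean : ∫ r, r ∂𝒟 = 0 := integral_id_eq_zero_of_map_neg (hrot _)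
  have hcov (w : EuclideanSpace ℝ (Fin m)) : ∫ r, ⟪r, w⟫ ^ 2 ∂𝒟 ≤ (m : ℝ)⁻¹ * ‖w‖ ^ 2 := by
    simpa only [finrank_euclideanSpace_fin] using integral_inner_sq_le_of_norm_le_one hrot hae w
  have hγ (a b : Fin k) (hab : a ≠ b) :
      2 + (m : ℝ)⁻¹ * Fintype.card (Fin k) ^ 2 < ‖γ a - γ b‖ := by
    simpa only [Fintype.card_fin, inv_mul_eq_div] using hΔ a b hab
  have hplanted (n : ℕ) :
      planted (Fin k) (Fin n) = fun p q ↦ if p.1 = q.1 then (n : ℝ)⁻¹ else 0 := by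
    ext p q
    rw [planted, Fintype.card_fin]
  simpa only [Fintype.card_fin, hplanted] using
    SDP_recovers_planted_clusters_general hae hmean (by positivity) hcov hγ
end
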